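/- arXiv:1011.6426 — 3 statements merged into one kernel-verified Lean document; each statement's English description precedes it below -/
import Mathlib

section
/- Periodic fermionic factorization (Lemma 5.2 / Lemma 3.2): Let l_1 > ... > l_s and m_1,...,m_s be positive integers, let p_1 ≥ 0 be an integer and define p_i = p_{i−1} + (m_1+...+m_{i−1})(l_{i−1} − l_i) for 2 ≤ i ≤ s, and p_{s+1} = p_s + (m_1+...+m_s) l_s. Let Ω_s be the set of integer tuples x = (x_{i,j}) with: 0 ≤ x_{i,1} ≤ ... ≤ x_{i,m_i} ≤ p_i + min(x_{i,1}, l_i − 1) for each i; x_{j,m_j} − p_j ≤ x_{i,1} for i < j; and x_{i,m_i} ≤ p_i + l_i − l_j + x_{j,1} − 1 for i < j. Then Σ_{x ∈ Ω_s} q^{|x|} = ([p_{s+1}]_q/[m_1]_q) · [p_1+m_1−1 choose m_1−1]_q · ∏_{i=2}^s [p_i+m_i−1 choose m_i]_q, where |x| = Σ_{i,k} x_{i,k}. -/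
open Finset

noncomputable def q : RatFunc ℚ := RatFunc.X

noncomputable def qInt (n : ℕ) : RatFunc ℚ := ∑ i ∈ Finset.range n, q ^ i

noncomputable def qPoch (n : ℕ) : RatFunc ℚ := ∏ i ∈ Finset.range n, (1 - q ^ (i + 1))

noncomputable def qb (n m : ℕ) : RatFunc ℚ := qPoch n / (qPoch m * qPoch (n - m))

theorem one_sub_q_pow_ne_zero (n : ℕ) : (1 : RatFunc ℚ) - q ^ (n + 1) ≠ 0 := by
  have h : (1 : Polynomial ℚ) - Polynomial.X ^ (n + 1) ≠ 0 := by
    intro h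
    simpa using congrArg (Polynomial.eval 0) h
  have := (map_ne_zero_iff _ (RatFunc.algebraMap_injective ℚ)).2 h
  simpa [q, RatFunc.algebraMap_X] using this

theorem one_sub_q_ne_zero : (1 : RatFunc ℚ) - q ≠ 0 := by
  simpa using one_sub_q_pow_ne_zero 0

theorem qInt_mul_one_sub (n : ℕ) : qInt n * (1 - q) = 1 - q ^ n := geom_sum_mul_neg q n

theorem qInt_ne_zero {n : ℕ} (hn : 0 < n) : qInt n ≠ 0 := by
  obtain ⟨k, rfl⟩ := Nat.exists_eq_add_of_lt hn
  intro h
  have := qInt_mul_one_sub (0 + k + 1)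
  rw [h, zero_mul] at this
  exact one_sub_q_pow_ne_zero _ this.symm

theorem qPoch_succ (n : ℕ) : qPoch (n + 1) = qPoch n * (1 - q ^ (n + 1)) :=
  Finset.prod_range_succ _ _

theorem qPoch_ne_zero (n : ℕ) : qPoch n ≠ 0 :=
  Finset.prod_ne_zero_iff.2 fun _ _ => one_sub_q_pow_ne_zero _

/-- Weakly increasing sequences of length `k` with entries below `p`. -/
def monoSeqs (k p : ℕ) : Finset (Fin k → ℕ) :=
  {z ∈ Fintype.piFinset fun _ : Fin k => range p | Monotone z}

theorem mem_monoSeqs {k p : ℕ} {z : Fin k → ℕ} :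
    z ∈ monoSeqs k p ↔ (∀ i, z i < p) ∧ Monotone z := by
  simp [monoSeqs]

theorem monotone_snoc {k : ℕ} {z : Fin k → ℕ} {c : ℕ} (hz : Monotone z) (hc : ∀ i, z i ≤ c) :
    Monotone (Fin.snoc z c : Fin (k + 1) → ℕ) := by
  intro i j hij
  induction j using Fin.lastCases with
  | last =>
    induction i using Fin.lastCases with
    | last => exact le_rfl
    | cast i => simpa using hc i
  | cast j =>
    induction i using Fin.lastCases with
    | last => exact absurd hij (by simp [Fin.le_def])
    | cast i => simpa using hz (by simpa using hij)

theorem monotone_cons {k : ℕ} {z : Fin k → ℕ} {c : ℕ} (hz : Monotone z) (hc : ∀ i, c ≤ z i) :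
    Monotone (Fin.cons c z : Fin (k + 1) → ℕ) := by
  intro i j hij
  induction i using Fin.cases with
  | zero =>
    induction j using Fin.cases with
    | zero => exact le_rfl
    | succ j => simpa using hc j
  | succ i =>
    induction j using Fin.cases with
    | zero => exact absurd hij (by simp)
    | succ j => simpa using hz (by simpa using hij)

theorem sum_monoSeqs_succ (k p : ℕ) :
    ∑ z ∈ monoSeqs (k + 1) (p + 1), q ^ (∑ i, z i) =
      ∑ z ∈ monoSeqs (k + 1) p, q ^ (∑ i, z i) +
        q ^ p * ∑ z ∈ monoSeqs k (p + 1), q ^ (∑ i, z i) := by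
  rw [← Finset.sum_filter_add_sum_filter_not _ (fun z => z (Fin.last k) < p)]
  congr 1
  · refine Finset.sum_congr ?_ fun _ _ => rfl
    ext z
    simp only [mem_filter, mem_monoSeqs]
    constructor
    · rintro ⟨⟨-, hz⟩, hp⟩
      exact ⟨fun i => (hz (Fin.le_last i)).trans_lt hp, hz⟩
    · rintro ⟨hp, hz⟩
      exact ⟨⟨fun i => (hp i).trans (Nat.lt_succ_self p), hz⟩, hp _⟩
  · rw [Finset.mul_sum]
    refine Finset.sum_nbij' (fun z => Fin.init z) (fun z => Fin.snoc z p) ?_ ?_ ?_ ?_ ?_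
    · intro z hz
      simp only [mem_filter, mem_monoSeqs] at hz ⊢
      exact ⟨fun i => hz.1.1 _, fun i j hij => hz.1.2 (by simpa using hij)⟩
    · intro z hz
      simp only [mem_filter, mem_monoSeqs] at hz ⊢
      refine ⟨⟨fun i => ?_, monotone_snoc hz.2 fun i => Nat.lt_succ_iff.1 (hz.1 i)⟩, by simp⟩
      induction i using Fin.lastCases with
      | last => simp
      | cast i => simpa using hz.1 i
    · intro z hz
      simp only [mem_filter, mem_monoSeqs] at hz
      have : p = z (Fin.last k) := by have := hz.1.1 (Fin.last k); omega
      rw [this, Fin.snoc_init_self]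
    · intro z _
      exact Fin.init_snoc _ _
    · intro z hz
      simp only [mem_filter, mem_monoSeqs] at hz
      have : z (Fin.last k) = p := by have := hz.1.1 (Fin.last k); omega
      rw [Fin.sum_univ_castSucc, this, add_comm, pow_add]
      rfl

theorem monoSeqs_zero_right (k : ℕ) : monoSeqs (k + 1) 0 = ∅ := by
  ext z
  simp [mem_monoSeqs]

theorem sum_monoSeqs_zero_left (p : ℕ) : ∑ z ∈ monoSeqs 0 p, q ^ (∑ i, z i) = 1 := by
  have : monoSeqs 0 p = univ := by
    ext z
    simp only [mem_monoSeqs, mem_univ, iff_true]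
    exact ⟨fun i => i.elim0, Subsingleton.monotone z⟩
  rw [this]
  simp

theorem sum_monoSeqs_add_one (k p : ℕ) :
    ∑ z ∈ monoSeqs k (p + 1), q ^ (∑ i, z i) = qPoch (p + k) / (qPoch k * qPoch p) := by
  induction k generalizing p with
  | zero =>
    rw [sum_monoSeqs_zero_left]
    have := qPoch_ne_zero p
    simp [qPoch] at this ⊢
    field_simp
  | succ k ihk =>
    induction p with
    | zero =>
      rw [sum_monoSeqs_succ, monoSeqs_zero_right, ihk]
      have := qPoch_ne_zero k
      have := qPoch_ne_zero (k + 1)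
      simp [qPoch] at *
      field_simp
    | succ p ihp =>
      rw [sum_monoSeqs_succ, ihp, ihk, show p + 1 + (k + 1) = p + k + 1 + 1 by ring,
        show p + (k + 1) = p + k + 1 by ring, show p + 1 + k = p + k + 1 by ring,
        qPoch_succ k, qPoch_succ p, qPoch_succ (p + k + 1)]
      have h1 := qPoch_ne_zero k
      have h2 := qPoch_ne_zero p
      have h3 := one_sub_q_pow_ne_zero k
      have h4 := one_sub_q_pow_ne_zero p
      field_simp
      ring

theorem sum_monoSeqs {k p : ℕ} (hp : 0 < p) :
    ∑ z ∈ monoSeqs k p, q ^ (∑ i, z i) = qb (p + k - 1) k := by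
  obtain ⟨p, rfl⟩ := Nat.exists_eq_add_of_lt hp
  rw [zero_add, sum_monoSeqs_add_one, qb]
  congr 3
  · omega
  · omega

/-- Weakly increasing sequences with entries below `p + l` and spread at most `p`. -/
def cyclicSeqs (k p l : ℕ) : Finset (Fin k → ℕ) :=
  {z ∈ Fintype.piFinset fun _ : Fin k => range (p + l) |
    Monotone z ∧ ∀ i j, z i ≤ p + z j}

theorem mem_cyclicSeqs {k p l : ℕ} {z : Fin k → ℕ} :
    z ∈ cyclicSeqs k p l ↔ (∀ i, z i < p + l) ∧ Monotone z ∧ ∀ i j, z i ≤ p + z j := by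
  simp [cyclicSeqs]

/-- Rotating `z₀ ≤ ⋯ ≤ z_k` to `z₁ ≤ ⋯ ≤ z_k ≤ z₀ + p`. -/
theorem sum_cyclicSeqs_rotate (k p l M : ℕ) :
    ∑ z ∈ cyclicSeqs (k + 1) p l with z 0 < l, q ^ (∑ i, z i + (p + M * min (z 0) l)) =
      ∑ z ∈ cyclicSeqs (k + 1) p l with ¬ z (Fin.last k) < p,
        q ^ (∑ i, z i + M * (z (Fin.last k) - p)) := by
  refine Finset.sum_nbij' (fun z => (Fin.snoc (Fin.tail z) (z 0 + p) : Fin (k + 1) → ℕ))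
    (fun z => (Fin.cons (z (Fin.last k) - p) (Fin.init z) : Fin (k + 1) → ℕ)) ?_ ?_ ?_ ?_ ?_
  · intro z hz
    simp only [mem_filter, mem_cyclicSeqs] at hz ⊢
    obtain ⟨⟨hb, hm, hs⟩, h0⟩ := hz
    have hle : ∀ i, z 0 ≤ z i := fun i => hm (Fin.zero_le i)
    refine ⟨⟨fun i => ?_, monotone_snoc (fun i j hij => hm (by simpa using hij)) fun i => ?_,
      fun i j => ?_⟩, by simp⟩
    · induction i using Fin.lastCases with
      | last => simp; omega
      | cast i => simpa [Fin.tail] using hb _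
    · have := hs i.succ 0
      simp only [Fin.tail]; omega
    · induction i using Fin.lastCases with
      | last =>
        induction j using Fin.lastCases with
        | last => simp
        | cast j => have := hle j.succ; simp [Fin.tail]; omega
      | cast i =>
        induction j using Fin.lastCases with
        | last => have := hs i.succ 0; simp [Fin.tail]; omega
        | cast j => simpa [Fin.tail] using hs _ _
  · intro z hz
    simp only [mem_filter, mem_cyclicSeqs] at hz ⊢
    obtain ⟨⟨hb, hm, hs⟩, h0⟩ := hz
    have hle : ∀ i, z i ≤ z (Fin.last k) := fun i => hm (Fin.le_last i)
    have hbl := hb (Fin.last k)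
    refine ⟨⟨fun i => ?_, monotone_cons (fun i j hij => hm (by simpa using hij)) fun i => ?_,
      fun i j => ?_⟩, by simp; omega⟩
    · induction i using Fin.cases with
      | zero => simp; omega
      | succ i => simpa [Fin.init] using hb _
    · have := hs (Fin.last k) i.castSucc
      simp only [Fin.init]; omega
    · induction i using Fin.cases with
      | zero =>
        induction j using Fin.cases with
        | zero => simp
        | succ j => have := hs (Fin.last k) j.castSucc; simp [Fin.init]; omega
      | succ i =>
        induction j using Fin.cases with
        | zero => have := hle i.castSucc; simp [Fin.init]; omega
        | succ j => simpa [Fin.init] using hs _ _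
  · intro z _
    simp
  · intro z hz
    simp only [mem_filter, mem_cyclicSeqs] at hz
    simp [Nat.sub_add_cancel (not_lt.1 hz.2)]
  · intro z hz
    simp only [mem_filter, mem_cyclicSeqs] at hz
    rw [Fin.sum_univ_succ z, Fin.sum_univ_castSucc, min_eq_left hz.2.le]
    simp only [Fin.snoc_castSucc, Fin.snoc_last, Fin.tail, Nat.add_sub_cancel]
    congr 1
    ring

theorem sum_cyclicSeqs_last_lt (k p l M : ℕ) :
    ∑ z ∈ cyclicSeqs (k + 1) p l with z (Fin.last k) < p,
        q ^ (∑ i, z i + M * (z (Fin.last k) - p)) =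
      ∑ z ∈ monoSeqs (k + 1) p, q ^ (∑ i, z i) := by
  refine Finset.sum_congr ?_ fun z hz => ?_
  · ext z
    simp only [mem_filter, mem_cyclicSeqs, mem_monoSeqs]
    constructor
    · rintro ⟨⟨-, hz, -⟩, hp⟩
      exact ⟨fun i => (hz (Fin.le_last i)).trans_lt hp, hz⟩
    · rintro ⟨hp, hz⟩
      exact ⟨⟨fun i => (hp i).trans_le (by omega), hz,
        fun i j => (hp i).le.trans (by omega)⟩, hp _⟩
  · simp only [mem_monoSeqs] at hz
    simp [Nat.sub_eq_zero_of_le (hz.1 (Fin.last k)).le]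

theorem sum_cyclicSeqs_le_head (k p l M : ℕ) :
    ∑ z ∈ cyclicSeqs (k + 1) p l with ¬ z 0 < l, q ^ (∑ i, z i + (p + M * min (z 0) l)) =
      q ^ (p + (M + (k + 1)) * l) * ∑ z ∈ monoSeqs (k + 1) p, q ^ (∑ i, z i) := by
  rw [Finset.mul_sum]
  refine Finset.sum_nbij' (fun z i => z i - l) (fun z i => z i + l) ?_ ?_ ?_ ?_ ?_
  · intro z hz
    simp only [mem_filter, mem_cyclicSeqs, mem_monoSeqs] at hz ⊢
    obtain ⟨⟨hb, hm, hs⟩, h0⟩ := hz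
    refine ⟨fun i => ?_, fun i j hij => Nat.sub_le_sub_right (hm hij) l⟩
    have := hb i
    have := hm (Fin.zero_le i)
    omega
  · intro z hz
    simp only [mem_filter, mem_cyclicSeqs, mem_monoSeqs] at hz ⊢
    refine ⟨⟨fun i => by simpa using hz.1 i, fun i j hij => Nat.add_le_add_right (hz.2 hij) l,
      fun i j => ?_⟩, by omega⟩
    have := hz.1 i
    omega
  · intro z hz
    simp only [mem_filter, mem_cyclicSeqs] at hz
    funext i
    have := hz.1.2.1 (Fin.zero_le i)
    exact Nat.sub_add_cancel (by omega)
  · intro z _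
    simp
  · intro z hz
    simp only [mem_filter, mem_cyclicSeqs] at hz
    have hl : ∀ i, z i = z i - l + l := fun i => by
      have := hz.1.2.1 (Fin.zero_le i)
      omega
    rw [min_eq_right (not_lt.1 hz.2), Finset.sum_congr rfl fun i _ => hl i,
      Finset.sum_add_distrib, ← pow_add]
    congr 1
    simp
    ring

theorem sum_cyclicSeqs (k p l M : ℕ) :
    ∑ z ∈ cyclicSeqs (k + 1) p l,
        (q ^ (∑ i, z i + M * (z (Fin.last k) - p)) - q ^ (∑ i, z i + (p + M * min (z 0) l))) =
      (1 - q ^ (p + (M + (k + 1)) * l)) * ∑ z ∈ monoSeqs (k + 1) p, q ^ (∑ i, z i) := by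
  rw [Finset.sum_sub_distrib,
    ← Finset.sum_filter_add_sum_filter_not _ (fun z => z (Fin.last k) < p),
    ← Finset.sum_filter_add_sum_filter_not (cyclicSeqs (k + 1) p l) (fun z => z 0 < l),
    sum_cyclicSeqs_rotate, sum_cyclicSeqs_last_lt, sum_cyclicSeqs_le_head]
  ring

theorem sum_cyclicSeqs_of_pos {m : ℕ} (hm : 0 < m) (p l M : ℕ) :
    ∑ z ∈ cyclicSeqs m p l,
        (q ^ (∑ i, z i + M * (z ⟨m - 1, Nat.sub_one_lt_of_lt hm⟩ - p)) -
          q ^ (∑ i, z i + (p + M * min (z ⟨0, hm⟩) l))) =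
      (1 - q ^ (p + (M + m) * l)) * ∑ z ∈ monoSeqs m p, q ^ (∑ i, z i) := by
  obtain ⟨k, rfl⟩ := Nat.exists_eq_add_one_of_ne_zero hm.ne'
  exact sum_cyclicSeqs k p l M

theorem sum_cyclicSeqs_zero {m : ℕ} (hm : 0 < m) (l : ℕ) :
    ∑ z ∈ cyclicSeqs m 0 l, q ^ (∑ i, z i) = ∑ c ∈ range l, q ^ (m * c) := by
  refine Finset.sum_nbij' (fun z => z ⟨0, hm⟩) (fun c _ => c) ?_ ?_ ?_ ?_ ?_
  · intro z hz
    rw [mem_cyclicSeqs] at hz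
    simpa using hz.1 ⟨0, hm⟩
  · intro c hc
    rw [mem_cyclicSeqs]
    exact ⟨fun _ => by simpa using hc, monotone_const, by simp⟩
  · intro z hz
    rw [mem_cyclicSeqs] at hz
    funext i
    exact le_antisymm (by simpa using hz.2.2 ⟨0, hm⟩ i) (by simpa using hz.2.2 i ⟨0, hm⟩)
  · intro c _
    rfl
  · intro z hz
    rw [mem_cyclicSeqs] at hz
    have : ∀ i, z i = z ⟨0, hm⟩ := fun i =>
      le_antisymm (by simpa using hz.2.2 i ⟨0, hm⟩) (by simpa using hz.2.2 ⟨0, hm⟩ i)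
    rw [Finset.sum_congr rfl fun i _ => this i]
    simp

theorem sum_cyclicSeqs_eq {m : ℕ} (hm : 0 < m) (p l : ℕ) :
    ∑ z ∈ cyclicSeqs m p l, q ^ (∑ i, z i) =
      qInt (p + m * l) * (1 / qInt m * qb (p + m - 1) (m - 1)) := by
  have hne := qInt_ne_zero hm
  have h1 := one_sub_q_ne_zero
  obtain ⟨k, rfl⟩ := Nat.exists_eq_add_one_of_ne_zero hm.ne'
  have hk := one_sub_q_pow_ne_zero k
  rcases Nat.eq_zero_or_pos p with rfl | hp
  · have hqb : qb (0 + (k + 1) - 1) (k + 1 - 1) = 1 := by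
      have := qPoch_ne_zero k
      simp [qb]
      simp [qPoch] at this ⊢
      exact this
    rw [sum_cyclicSeqs_zero hm, hqb, zero_add, mul_one, mul_one_div, eq_div_iff hne]
    apply mul_right_cancel₀ h1
    rw [mul_assoc, qInt_mul_one_sub, qInt_mul_one_sub, pow_mul,
      ← geom_sum_mul_neg (q ^ (k + 1))]
    simp only [pow_mul]
  · have h := sum_cyclicSeqs_of_pos hm p l 0
    obtain ⟨r, rfl⟩ := Nat.exists_eq_add_one_of_ne_zero hp.ne'
    have hr := one_sub_q_pow_ne_zero r
    have hP := qInt_mul_one_sub (r + 1 + (k + 1) * l)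
    have hK := qInt_mul_one_sub (k + 1)
    simp only [zero_mul, add_zero, zero_add, pow_add _ (∑ i, _), ← mul_one_sub,
      ← Finset.sum_mul] at h
    rw [sum_monoSeqs_add_one, ← hP] at h
    apply mul_right_cancel₀ hr
    rw [h, qb, show r + 1 + (k + 1) - 1 = r + (k + 1) by omega,
      show r + (k + 1) - (k + 1 - 1) = r + 1 by omega, Nat.add_sub_cancel, qPoch_succ k,
      qPoch_succ r, ← hK]
    have := qPoch_ne_zero k
    have := qPoch_ne_zero r
    field_simp

/-- The translation-invariant conditions on a family of sequences `x i` of length `m i`. -/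
def IsPeriodic {n : ℕ} (l : Fin n → ℕ) {m : Fin n → ℕ} (p : Fin n → ℕ)
    (x : (i : Fin n) → Fin (m i) → ℕ) : Prop :=
  (∀ i, Monotone (x i)) ∧ (∀ i j k, x i j ≤ p i + x i k) ∧
    (∀ i j, i < j → ∀ a b, x j b ≤ p j + x i a) ∧
    ∀ i j, i < j → ∀ a b, x i a + l j + 1 ≤ p i + l i + x j b

theorem isPeriodic_succ_iff {n : ℕ} {l m p : Fin (n + 1) → ℕ}
    {x : (i : Fin (n + 1)) → Fin (m i) → ℕ} :
    IsPeriodic l p x ↔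
      IsPeriodic (fun i => l (Fin.castSucc i)) (fun i => p (Fin.castSucc i))
        (fun i => x (Fin.castSucc i)) ∧
      Monotone (x (Fin.last n)) ∧
      (∀ j k, x (Fin.last n) j ≤ p (Fin.last n) + x (Fin.last n) k) ∧
      (∀ (i : Fin n) a b, x (Fin.last n) b ≤ p (Fin.last n) + x i.castSucc a) ∧
      ∀ (i : Fin n) a b, x i.castSucc a + l (Fin.last n) + 1 ≤
        p i.castSucc + l i.castSucc + x (Fin.last n) b := by
  have hn : ∀ i : Fin n, ¬ Fin.last n < i.castSucc := fun i => (Fin.castSucc_lt_last i).le.not_gt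
  simp only [IsPeriodic, Fin.forall_fin_succ', Fin.castSucc_lt_castSucc_iff,
    Fin.castSucc_lt_last, lt_irrefl, hn, forall_const, IsEmpty.forall_iff, forall_and, and_true]
  tauto

open Classical in
/-- The periodic families whose `i`-th sequence has entries below `p i + l i`. -/
noncomputable def configs {n : ℕ} (l m p : Fin n → ℕ) :
    Finset ((i : Fin n) → Fin (m i) → ℕ) :=
  {x ∈ Fintype.piFinset fun i => Fintype.piFinset fun _ : Fin (m i) => range (p i + l i) |
    IsPeriodic l p x}

theorem mem_configs {n : ℕ} {l m p : Fin n → ℕ} {x : (i : Fin n) → Fin (m i) → ℕ} :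
    x ∈ configs l m p ↔ (∀ i a, x i a < p i + l i) ∧ IsPeriodic l p x := by
  simp [configs]

theorem IsPeriodic.sub {n : ℕ} {l m p : Fin n → ℕ} {x : (i : Fin n) → Fin (m i) → ℕ}
    (hx : IsPeriodic l p x) {L : ℕ} (hl : ∀ i, L < l i) (k : ℕ) {d : ℕ} (hd : ∀ i a, d ≤ x i a) :
    IsPeriodic (fun i => l i - L + k) p (fun i a => x i a - d) := by
  obtain ⟨h1, h2, h3, h4⟩ := hx
  refine ⟨fun i a b hab => Nat.sub_le_sub_right (h1 i hab) d, fun i j k => ?_,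
    fun i j hij a b => ?_, fun i j hij a b => ?_⟩
  · have := h2 i j k; dsimp only; omega
  · have := h3 i j hij a b; have := hd i a; dsimp only; omega
  · have := h4 i j hij a b; have := hd i a; have := hd j b
    have := hl i; have := hl j; dsimp only; omega

theorem IsPeriodic.add {n : ℕ} {l m p : Fin n → ℕ} {x : (i : Fin n) → Fin (m i) → ℕ} {L k : ℕ}
    (hx : IsPeriodic (fun i => l i - L + k) p x) (hl : ∀ i, L < l i) (d : ℕ) :
    IsPeriodic l p (fun i a => x i a + d) := by
  obtain ⟨h1, h2, h3, h4⟩ := hx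
  refine ⟨fun i a b hab => Nat.add_le_add_right (h1 i hab) d, fun i j k => ?_,
    fun i j hij a b => ?_, fun i j hij a b => ?_⟩
  · have := h2 i j k; dsimp only; omega
  · have := h3 i j hij a b; dsimp only; omega
  · have := h4 i j hij a b; have := hl i; have := hl j; dsimp only at *; omega

/-- Summing first over all sequences but the last one, translated so that the constraint coming
from the last sequence becomes nonnegativity. -/
theorem sum_configs_succ {n : ℕ} (l m p : Fin (n + 1) → ℕ) (hm : 0 < m (Fin.last n))
    (hl : ∀ i : Fin n, l (Fin.last n) < l i.castSucc) :
    ∑ x ∈ configs l m p, q ^ (∑ i, ∑ a, x i a) =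
      ∑ z ∈ cyclicSeqs (m (Fin.last n)) (p (Fin.last n)) (l (Fin.last n)),
        q ^ (∑ a, z a + (∑ i : Fin n, m i.castSucc) *
          (z ⟨m (Fin.last n) - 1, Nat.sub_one_lt_of_lt hm⟩ - p (Fin.last n))) *
        ∑ y ∈ configs (fun i : Fin n => l i.castSucc - l (Fin.last n) +
            (min (z ⟨0, hm⟩) (l (Fin.last n)) -
              (z ⟨m (Fin.last n) - 1, Nat.sub_one_lt_of_lt hm⟩ - p (Fin.last n))))
            (fun i => m i.castSucc) (fun i => p i.castSucc),
          q ^ (∑ i, ∑ a, y i a) := by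
  set A : Fin (m (Fin.last n)) := ⟨0, hm⟩ with hA
  set Z : Fin (m (Fin.last n)) := ⟨m (Fin.last n) - 1, Nat.sub_one_lt_of_lt hm⟩ with hZ
  have leZ : ∀ a, a ≤ Z := fun a => by have := a.2; rw [Fin.le_def]; simp only [hZ]; omega
  have geA : ∀ a, A ≤ a := fun a => by rw [Fin.le_def]; simp [hA]
  simp only [Finset.mul_sum]
  rw [Finset.sum_sigma']
  refine Finset.sum_nbij'
    (fun x => ⟨x (Fin.last n), fun i a => x i.castSucc a - (x (Fin.last n) Z - p (Fin.last n))⟩)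
    (fun w => Fin.snoc (α := fun i => Fin (m i) → ℕ)
      (fun i a => w.2 i a + (w.1 Z - p (Fin.last n))) w.1) ?_ ?_ ?_ ?_ ?_
  · intro x hx
    rw [mem_configs, isPeriodic_succ_iff] at hx
    obtain ⟨hb, hper, hmono, hsp, hlow, hup⟩ := hx
    rw [mem_sigma, mem_cyclicSeqs, mem_configs]
    refine ⟨⟨hb _, hmono, hsp⟩, fun i a => ?_, hper.sub hl _ fun i a => ?_⟩
    · have := hb i.castSucc a
      have := hup i a A
      have := hlow i a Z
      have := hb (Fin.last n) Z
      have := hsp Z A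
      have := hl i
      dsimp only
      omega
    · have := hlow i a Z
      omega
  · rintro ⟨z, y⟩ hw
    rw [mem_sigma, mem_cyclicSeqs, mem_configs] at hw
    obtain ⟨⟨hzb, hmono, hsp⟩, hyb, hper⟩ := hw
    dsimp only at hzb hmono hsp hyb hper
    have hzZ := hzb Z
    have hZA := hsp Z A
    have hub : ∀ (i : Fin n) a, y i a + (z Z - p (Fin.last n)) + l (Fin.last n) <
        p i.castSucc + l i.castSucc + min (z A) (l (Fin.last n)) := fun i a => by
      have := hyb i a
      have := hl i
      omega
    rw [mem_configs, isPeriodic_succ_iff]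
    simp only [Fin.forall_fin_succ', Fin.snoc_castSucc, Fin.snoc_last]
    refine ⟨⟨fun i a => ?_, hzb⟩, hper.add hl _, hmono, hsp, fun i a b => ?_, fun i a b => ?_⟩
    · have := hub i a
      omega
    · have := hmono (leZ b)
      omega
    · have := hub i a
      have := hmono (geA b)
      omega
  · intro x hx
    rw [mem_configs, isPeriodic_succ_iff] at hx
    obtain ⟨-, -, -, -, hlow, -⟩ := hx
    funext i
    induction i using Fin.lastCases with
    | last => simp
    | cast i =>
      funext a
      have := hlow i a Z
      simp only [Fin.snoc_castSucc]
      omega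
  · rintro ⟨z, y⟩ _
    simp
  · intro x hx
    rw [mem_configs, isPeriodic_succ_iff] at hx
    obtain ⟨-, -, -, -, hlow, -⟩ := hx
    rw [← pow_add, Fin.sum_univ_castSucc]
    congr 1
    have : ∀ (i : Fin n) a, x i.castSucc a =
        x i.castSucc a - (x (Fin.last n) Z - p (Fin.last n)) +
          (x (Fin.last n) Z - p (Fin.last n)) := fun i a => by
      have := hlow i a Z
      omega
    rw [Finset.sum_congr rfl fun i _ => Finset.sum_congr rfl fun a _ => this i a]
    simp only [Finset.sum_add_distrib, Finset.sum_const, card_univ, Fintype.card_fin, smul_eq_mul,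
      ← Finset.sum_mul]
    ring

theorem sum_configs {n : ℕ} (l m p : Fin (n + 1) → ℕ) (hlpos : ∀ i, 0 < l i)
    (hmpos : ∀ i, 0 < m i) (hdec : ∀ i j, i < j → l j < l i)
    (hrec : ∀ i j : Fin (n + 1), (j : ℕ) = (i : ℕ) + 1 →
      p j = p i + (∑ k with k ≤ i, m k) * (l i - l j)) :
    ∑ x ∈ configs l m p, q ^ (∑ i, ∑ a, x i a) =
      qInt (p (Fin.last n) + (∑ i, m i) * l (Fin.last n)) *
        (1 / qInt (m 0) * qb (p 0 + m 0 - 1) (m 0 - 1) *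
          ∏ i : Fin n, qb (p i.succ + m i.succ - 1) (m i.succ)) := by
  induction n with
  | zero =>
    rw [sum_configs_succ l m p (hmpos _) (fun i => i.elim0)]
    have h : ∀ l' : Fin 0 → ℕ, configs l' (fun i : Fin 0 => m i.castSucc)
        (fun i => p i.castSucc) = univ := fun l' => by
      ext y
      simp only [mem_configs, mem_univ, iff_true]
      exact ⟨fun i => i.elim0, fun i => i.elim0, fun i => i.elim0, fun i => i.elim0,
        fun i => i.elim0⟩
    simp only [h]
    simpa using sum_cyclicSeqs_eq (hmpos 0) (p 0) (l 0)
  | succ n ih =>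
    have hl : ∀ i : Fin (n + 1), l (Fin.last (n + 1)) < l i.castSucc :=
      fun i => hdec _ _ (Fin.castSucc_lt_last i)
    have hp := hrec (Fin.castSucc (Fin.last n)) (Fin.last (n + 1)) (by simp)
    have hM : ∑ k with k ≤ Fin.castSucc (Fin.last n), m k = ∑ i : Fin (n + 1), m i.castSucc := by
      rw [Finset.sum_filter, Fin.sum_univ_castSucc]
      simp [Fin.le_last]
    rw [hM] at hp
    have hppos : 0 < p (Fin.last (n + 1)) := by
      rw [hp]
      have : 0 < ∑ i : Fin (n + 1), m i.castSucc :=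
        Finset.sum_pos (fun i _ => hmpos _) univ_nonempty
      have := Nat.mul_pos this (Nat.sub_pos_of_lt (hl (Fin.last n)))
      omega
    have ih' : ∀ k, _ := fun k => ih (fun i => l i.castSucc - l (Fin.last (n + 1)) + k)
      (fun i => m i.castSucc) (fun i => p i.castSucc)
      (fun i => by have := hl i; omega) (fun i => hmpos _)
      (fun i j hij => by
        have := hdec i.castSucc j.castSucc (by simpa using hij)
        have := hl j
        omega)
      (fun i j hij => by
        have h := hrec i.castSucc j.castSucc (by simpa using hij)
        have hs : ∑ k with k ≤ i.castSucc, m k =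
            ∑ k : Fin (n + 1) with k ≤ i, m k.castSucc := by
          rw [Finset.sum_filter, Fin.sum_univ_castSucc, Finset.sum_filter]
          simp [(Fin.castSucc_lt_last i).not_ge]
        have := hl i
        have := hl j
        rw [h, hs]
        congr 2
        omega)
    rw [sum_configs_succ l m p (hmpos _) hl]
    simp only [ih', mul_add, ← add_assoc, ← hp]
    set M := ∑ i : Fin (n + 1), m i.castSucc with hMdef
    apply mul_right_cancel₀ one_sub_q_ne_zero
    have key := sum_cyclicSeqs_of_pos (hmpos (Fin.last (n + 1))) (p (Fin.last (n + 1)))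
      (l (Fin.last (n + 1))) M
    rw [sum_monoSeqs hppos] at key
    rw [Fin.prod_univ_castSucc, Fin.sum_univ_castSucc, ← hMdef, Fin.succ_last]
    simp only [Fin.succ_castSucc, Fin.castSucc_zero]
    set C := 1 / qInt (m 0) * qb (p 0 + m 0 - 1) (m 0 - 1) *
      ∏ i : Fin n, qb (p i.succ.castSucc + m i.succ.castSucc - 1) (m i.succ.castSucc)
    rw [mul_right_comm (qInt _) _ (1 - q), qInt_mul_one_sub, ← mul_assoc (1 / _ * _),
      mul_comm _ (qb (p (Fin.last _) + _ - 1) _), ← mul_assoc, ← key, Finset.sum_mul,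
      Finset.sum_mul]
    refine Finset.sum_congr rfl fun z hz => ?_
    rw [mem_cyclicSeqs] at hz
    set Z : Fin (m (Fin.last (n + 1))) :=
      ⟨m (Fin.last (n + 1)) - 1, Nat.sub_one_lt_of_lt (hmpos _)⟩
    set A : Fin (m (Fin.last (n + 1))) := ⟨0, hmpos _⟩
    obtain ⟨k, hk⟩ : ∃ k, min (z A) (l (Fin.last (n + 1))) = z Z - p (Fin.last (n + 1)) + k := by
      apply Nat.exists_eq_add_of_le
      have := hz.1 Z
      have := hz.2.2 Z A
      omega
    rw [hk, Nat.add_sub_cancel_left, ← mul_assoc, mul_right_comm, mul_assoc (q ^ _) (qInt _),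
      qInt_mul_one_sub, mul_sub, mul_one, ← pow_add]
    congr 3
    ring

theorem add_le_of_rec {n : ℕ} (l m p : Fin (n + 1) → ℕ)
    (hmpos : ∀ i, 0 < m i) (hdec : ∀ i j, i < j → l j < l i)
    (hrec : ∀ i j : Fin (n + 1), (j : ℕ) = (i : ℕ) + 1 →
      p j = p i + (∑ k with k ≤ i, m k) * (l i - l j)) (i : Fin (n + 1)) :
    p i + l i ≤ p (Fin.last n) + (∑ i, m i) * l (Fin.last n) := by
  have hmono : Monotone fun i => p i + l i := by
    refine Fin.monotone_iff_le_succ.2 fun i => ?_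
    have h := hrec i.castSucc i.succ (by simp)
    have hd := hdec i.castSucc i.succ Fin.castSucc_lt_succ
    have hM : 0 < ∑ k with k ≤ i.castSucc, m k :=
      Finset.sum_pos (fun k _ => hmpos k) ⟨i.castSucc, by simp⟩
    have := Nat.le_mul_of_pos_left (l i.castSucc - l i.succ) hM
    omega
  have hM : 0 < ∑ k, m k := Finset.sum_pos (fun k _ => hmpos k) univ_nonempty
  have := hmono (Fin.le_last i)
  have := Nat.le_mul_of_pos_left (l (Fin.last n)) hM
  dsimp only at *
  omega

theorem stmt14 (s : ℕ) (hs : 0 < s) (l m : Fin s → ℕ)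
    (hlpos : ∀ i, 0 < l i) (hmpos : ∀ i, 0 < m i)
    (hdec : ∀ i j : Fin s, i < j → l j < l i)
    (p : Fin s → ℕ)
    (hrec : ∀ i j : Fin s, (j : ℕ) = (i : ℕ) + 1 →
      p j = p i + (∑ k ∈ Finset.univ.filter (fun k : Fin s => k ≤ i), m k) * (l i - l j))
    (P : ℕ) (hP : P = p ⟨s - 1, by omega⟩ + (∑ i, m i) * l ⟨s - 1, by omega⟩) :
    ∑ x ∈ (Finset.univ : Finset ((i : Fin s) → Fin (m i) → Fin P)).filter
        (fun x =>
          (∀ i : Fin s, ∀ j k : Fin (m i), j ≤ k → x i j ≤ x i k) ∧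
          (∀ i : Fin s, ∀ j k : Fin (m i),
            (x i j).val ≤ p i + min (x i k).val (l i - 1)) ∧
          (∀ i j : Fin s, i < j → ∀ a : Fin (m i), ∀ b : Fin (m j),
            (x j b).val ≤ p j + (x i a).val) ∧
          (∀ i j : Fin s, i < j → ∀ a : Fin (m i), ∀ b : Fin (m j),
            (x i a).val + l j + 1 ≤ p i + l i + (x j b).val)),
      q ^ (∑ i, ∑ k, (x i k : ℕ)) =
    qInt P / qInt (m ⟨0, hs⟩) *
      qb (p ⟨0, hs⟩ + m ⟨0, hs⟩ - 1) (m ⟨0, hs⟩ - 1) *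
      ∏ i ∈ Finset.univ.filter (fun i : Fin s => 0 < (i : ℕ)),
        qb (p i + m i - 1) (m i) := by
  obtain ⟨n, rfl⟩ := Nat.exists_eq_add_one_of_ne_zero hs.ne'
  have hlast : (⟨n + 1 - 1, by omega⟩ : Fin (n + 1)) = Fin.last n := rfl
  have hzero : (⟨0, hs⟩ : Fin (n + 1)) = 0 := rfl
  rw [hlast] at hP
  have hprod : ∏ i ∈ Finset.univ.filter (fun i : Fin (n + 1) => 0 < (i : ℕ)),
      qb (p i + m i - 1) (m i) = ∏ i : Fin n, qb (p i.succ + m i.succ - 1) (m i.succ) := by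
    rw [Finset.prod_filter, Fin.prod_univ_succ]
    simp
  have hle := add_le_of_rec l m p hmpos hdec hrec
  rw [← hP] at hle
  rw [hzero, hprod, div_eq_mul_one_div, mul_assoc (qInt P), mul_assoc (qInt P), hP,
    ← sum_configs l m p hlpos hmpos hdec hrec, ← hP]
  refine Finset.sum_nbij (fun x i a => (x i a : ℕ)) ?_ ?_ ?_ ?_
  · intro x hx
    simp only [mem_filter, mem_univ, true_and] at hx
    obtain ⟨h1, h2, h3, h4⟩ := hx
    refine mem_configs.2 ⟨fun i a => ?_, fun i a b hab => h1 i a b hab, fun i j k => ?_, h3, h4⟩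
    · have := h2 i a a
      have := hlpos i
      omega
    · have := h2 i j k
      dsimp only
      omega
  · intro x _ y _ hxy
    funext i a
    exact Fin.ext (congrFun (congrFun hxy i) a)
  · intro y hy
    obtain ⟨hb, h1, h2, h3, h4⟩ := mem_configs.1 hy
    refine ⟨fun i a => ⟨y i a, (hb i a).trans_le (hle i)⟩, ?_, rfl⟩
    simp only [coe_filter, mem_univ, true_and, Set.mem_ofPred_eq]
    refine ⟨fun i a b hab => h1 i hab, fun i j k => ?_, h3, h4⟩
    have := h2 i j k
    have := hb i j
    have := hlpos i
    omega
  · intro x _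
    rfl
end

section
/- Counting formula at q = 1 for the periodic level set: with the data of the periodic fermionic factorization (l_1 > ... > l_s, multiplicities m_i, p_1 ≥ 0, p_i defined recursively, p_{s+1} = p_s + (Σ m_i) l_s), the cardinality of Ω_s equals (p_{s+1}/m_1) · binom(p_1+m_1−1, m_1−1) · ∏_{i=2}^s binom(p_i+m_i−1, m_i). -/
open Finset

/-- Weakly increasing `n`-tuples of natural numbers below `p`. -/
def boundedMonotone (n p : ℕ) : Set (Fin n → ℕ) :=
  {z | Monotone z ∧ ∀ i, z i < p}

/-- Weakly increasing `n`-tuples of natural numbers at most `p` that do not start above `0`. -/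
def pinnedMonotone (n p : ℕ) : Set (Fin n → ℕ) :=
  {z | z ∈ boundedMonotone n (p + 1) ∧ ∀ h : 0 < n, z ⟨0, h⟩ = 0}

lemma boundedMonotone_finite (n p : ℕ) : (boundedMonotone n p).Finite :=
  (Set.finite_Iic fun _ => p).subset fun _ hz i => (hz.2 i).le

lemma pinnedMonotone_succ (n p : ℕ) :
    pinnedMonotone (n + 1) p =
      (fun z => (Fin.cons 0 z : Fin (n + 1) → ℕ)) '' boundedMonotone n (p + 1) := by
  ext z
  constructor
  · rintro ⟨⟨hmono, hlt⟩, h0⟩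
    have h0 : z 0 = 0 := h0 n.succ_pos
    refine ⟨Fin.tail z, ⟨fun i j hij => hmono (Fin.succ_le_succ_iff.2 hij), fun i => hlt _⟩, ?_⟩
    rw [← h0]
    exact Fin.cons_self_tail z
  · rintro ⟨z, ⟨hmono, hlt⟩, rfl⟩
    refine ⟨⟨?_, ?_⟩, fun _ => rfl⟩
    · intro i j hij
      induction i using Fin.cases with
      | zero => simp
      | succ i =>
        induction j using Fin.cases with
        | zero => simp at hij
        | succ j => simpa using hmono (Fin.succ_le_succ_iff.1 hij)
    · intro i
      induction i using Fin.cases with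
      | zero => simp
      | succ i => simpa using hlt i

lemma ncard_pinnedMonotone_succ (n p : ℕ) :
    (pinnedMonotone (n + 1) p).ncard = (boundedMonotone n (p + 1)).ncard := by
  rw [pinnedMonotone_succ]
  exact Set.ncard_image_of_injective _ (Fin.cons_right_injective (α := fun _ => ℕ) 0)

lemma boundedMonotone_succ_succ (n p : ℕ) :
    boundedMonotone (n + 1) (p + 1) =
      pinnedMonotone (n + 1) p ∪ (fun z i => z i + 1) '' boundedMonotone (n + 1) p := by
  ext z
  constructor
  · intro hz
    by_cases h0 : z 0 = 0
    · exact Or.inl ⟨hz, fun _ => h0⟩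
    · have hpos : ∀ i, 1 ≤ z i := fun i => by
        have := hz.1 (Fin.zero_le i)
        omega
      refine Or.inr ⟨fun i => z i - 1, ⟨fun i j hij => Nat.sub_le_sub_right (hz.1 hij) 1, ?_⟩, ?_⟩
      · intro i
        have := hz.2 i
        have := hpos i
        show z i - 1 < p
        omega
      · funext i
        exact Nat.sub_add_cancel (hpos i)
  · rintro (hz | ⟨z, hz, rfl⟩)
    · exact hz.1
    · exact ⟨fun i j hij => Nat.add_le_add_right (hz.1 hij) 1,
        fun i => Nat.add_lt_add_right (hz.2 i) 1⟩

lemma ncard_boundedMonotone (n p : ℕ) : (boundedMonotone n p).ncard = p.multichoose n := by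
  induction n generalizing p with
  | zero =>
    rw [Nat.multichoose_zero_right, Set.ncard_eq_one]
    refine ⟨Fin.elim0, Set.eq_singleton_iff_unique_mem.2 ⟨⟨fun i => i.elim0, fun i => i.elim0⟩, ?_⟩⟩
    intro z _
    exact Subsingleton.elim _ _
  | succ n ihn =>
    induction p with
    | zero =>
      rw [Nat.multichoose_zero_succ, Set.ncard_eq_zero (boundedMonotone_finite _ _)]
      exact Set.eq_empty_iff_forall_notMem.2 fun z hz => absurd (hz.2 0) (Nat.not_lt_zero _)
    | succ p ihp =>
      rw [boundedMonotone_succ_succ, Set.ncard_union_eq ?_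
          ((boundedMonotone_finite _ _).subset fun z hz => hz.1)
          ((boundedMonotone_finite _ _).image _), ncard_pinnedMonotone_succ, ihn,
        Set.ncard_image_of_injective, ihp, Nat.multichoose_succ_succ, add_comm]
      · intro z w h
        funext i
        exact Nat.add_right_cancel (congrFun h i)
      · rw [Set.disjoint_left]
        rintro _ hz ⟨z, -, rfl⟩
        exact Nat.succ_ne_zero _ (hz.2 n.succ_pos)

lemma ncard_pinnedMonotone {n : ℕ} (hn : 0 < n) (p : ℕ) :
    (pinnedMonotone n p).ncard = (p + n - 1).choose (n - 1) := by
  obtain ⟨n, rfl⟩ := Nat.exists_eq_succ_of_ne_zero hn.ne'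
  rw [ncard_pinnedMonotone_succ, ncard_boundedMonotone, Nat.multichoose_eq]
  congr 1
  omega

/-- The periodic level set: families of weakly increasing tuples subject to the periodicity
bounds inside each block and the interlacing bounds between blocks. -/
def levelSet {s : ℕ} (l m p : Fin s → ℕ) : Set ((i : Fin s) → Fin (m i) → ℕ) :=
  {x | (∀ i, Monotone (x i)) ∧
    (∀ i j k, x i j ≤ p i + x i k) ∧
    (∀ i j, x i j + 1 ≤ p i + l i) ∧
    (∀ i j, i < j → ∀ a b, x j b ≤ p j + x i a) ∧
    (∀ i j, i < j → ∀ a b, x i a + l j + 1 ≤ p i + l i + x j b)}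

lemma levelSet_finite {s : ℕ} (l m p : Fin s → ℕ) : (levelSet l m p).Finite :=
  (Set.finite_Iic fun i _ => p i + l i).subset fun x hx i j => by
    have := hx.2.2.1 i j
    show x i j ≤ p i + l i
    omega

lemma snoc_mem_levelSet {s : ℕ} (l m p : Fin (s + 1) → ℕ)
    (x : (i : Fin s) → Fin (m i.castSucc) → ℕ) (z : Fin (m (Fin.last s)) → ℕ) :
    (Fin.snoc x z : (i : Fin (s + 1)) → Fin (m i) → ℕ) ∈ levelSet l m p ↔
      x ∈ levelSet (fun i => l i.castSucc) (fun i => m i.castSucc) (fun i => p i.castSucc) ∧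
      Monotone z ∧
      (∀ j k, z j ≤ p (Fin.last s) + z k) ∧
      (∀ j, z j + 1 ≤ p (Fin.last s) + l (Fin.last s)) ∧
      (∀ i a b, z b ≤ p (Fin.last s) + x i a) ∧
      (∀ i a b, x i a + l (Fin.last s) + 1 ≤ p i.castSucc + l i.castSucc + z b) := by
  simp only [levelSet, Set.mem_ofPred_eq, Fin.forall_fin_succ', Fin.snoc_castSucc, Fin.snoc_last,
    Fin.castSucc_lt_castSucc_iff, Fin.castSucc_lt_last, lt_irrefl, forall_const,
    IsEmpty.forall_iff, and_true, forall_and, (Fin.castSucc_lt_last _).not_gt, implies_true]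
  tauto

/-- The smallest of `c` and the entries of `x`. -/
noncomputable def minEntry {s : ℕ} {m : Fin s → ℕ} (c : ℕ) (x : (i : Fin s) → Fin (m i) → ℕ) : ℕ :=
  sInf (insert c {n | ∃ i a, n = x i a})

lemma minEntry_le_left {s : ℕ} {m : Fin s → ℕ} (c : ℕ) (x : (i : Fin s) → Fin (m i) → ℕ) :
    minEntry c x ≤ c :=
  Nat.sInf_le (Set.mem_insert _ _)

lemma minEntry_le_entry {s : ℕ} {m : Fin s → ℕ} (c : ℕ) (x : (i : Fin s) → Fin (m i) → ℕ)
    (i : Fin s) (a : Fin (m i)) : minEntry c x ≤ x i a :=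
  Nat.sInf_le (Set.mem_insert_of_mem _ ⟨i, a, rfl⟩)

lemma minEntry_eq {s : ℕ} {m : Fin s → ℕ} (c : ℕ) (x : (i : Fin s) → Fin (m i) → ℕ) :
    minEntry c x = c ∨ ∃ i a, minEntry c x = x i a :=
  Nat.sInf_mem (Set.insert_nonempty c {n | ∃ i a, n = x i a})

/-- Append a block starting at `k` to a family translated by `k`. -/
def shiftSnoc {s : ℕ} (m : Fin (s + 1) → ℕ)
    (t : ℕ × ((i : Fin s) → Fin (m i.castSucc) → ℕ) × (Fin (m (Fin.last s)) → ℕ)) :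
    (i : Fin (s + 1)) → Fin (m i) → ℕ :=
  Fin.snoc (α := fun i => Fin (m i) → ℕ) (fun i a => t.2.1 i a + t.1) (fun a => t.2.2 a + t.1)

/-- Append a block translated so that it lies above the smallest of `c` and the entries. -/
noncomputable def aboveSnoc {s : ℕ} (m : Fin (s + 1) → ℕ) (c : ℕ)
    (t : ((i : Fin s) → Fin (m i.castSucc) → ℕ) × (Fin (m (Fin.last s)) → ℕ)) :
    (i : Fin (s + 1)) → Fin (m i) → ℕ :=
  Fin.snoc (α := fun i => Fin (m i) → ℕ) t.1 (fun a => t.2 a + (minEntry c t.1 + 1))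

lemma snoc_injective {s : ℕ} {m : Fin (s + 1) → ℕ}
    {x x' : (i : Fin s) → Fin (m i.castSucc) → ℕ} {z z' : Fin (m (Fin.last s)) → ℕ}
    (h : (Fin.snoc x z : (i : Fin (s + 1)) → Fin (m i) → ℕ) = Fin.snoc x' z') :
    x = x' ∧ z = z' := by
  have h1 := congrArg Fin.init h
  have h2 := congrFun h (Fin.last s)
  rw [Fin.init_snoc, Fin.init_snoc] at h1
  rw [Fin.snoc_last, Fin.snoc_last] at h2
  exact ⟨h1, h2⟩

lemma shiftSnoc_injOn {s : ℕ} (m : Fin (s + 1) → ℕ) (hm : 0 < m (Fin.last s)) (p : ℕ)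
    (K : Set ℕ) (X : Set ((i : Fin s) → Fin (m i.castSucc) → ℕ)) :
    Set.InjOn (shiftSnoc m) (K ×ˢ X ×ˢ pinnedMonotone (m (Fin.last s)) p) := by
  rintro ⟨k, x, z⟩ ⟨-, -, hz⟩ ⟨k', x', z'⟩ ⟨-, -, hz'⟩ h
  obtain ⟨h1, h2⟩ := snoc_injective h
  have h0 : z ⟨0, hm⟩ = 0 := hz.2 hm
  have h0' : z' ⟨0, hm⟩ = 0 := hz'.2 hm
  have hk : k = k' := by simpa [h0, h0'] using congrFun h2 ⟨0, hm⟩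
  subst hk
  have hx : x = x' := by
    funext i a
    exact Nat.add_right_cancel (congrFun (congrFun h1 i) a)
  have hzz : z = z' := by
    funext a
    exact Nat.add_right_cancel (congrFun h2 a)
  rw [hx, hzz]

lemma aboveSnoc_injective {s : ℕ} (m : Fin (s + 1) → ℕ) (c : ℕ) :
    Function.Injective (aboveSnoc m c) := by
  rintro ⟨x, z⟩ ⟨x', z'⟩ h
  obtain ⟨h1, h2⟩ := snoc_injective h
  simp only at h1 h2
  subst h1
  have hzz : z = z' := by
    funext a
    exact Nat.add_right_cancel (congrFun h2 a)
  rw [hzz]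

section Recursion

variable {s : ℕ} {l m p : Fin (s + 1) → ℕ}

lemma shiftSnoc_mem_levelSet
    (hl : ∀ i : Fin s, l (Fin.last s) ≤ l i.castSucc) {k : ℕ} (hk : k < l (Fin.last s))
    {x : (i : Fin s) → Fin (m i.castSucc) → ℕ}
    (hx : x ∈ levelSet (fun i => l i.castSucc - l (Fin.last s))
      (fun i => m i.castSucc) (fun i => p i.castSucc))
    {z : Fin (m (Fin.last s)) → ℕ}
    (hz : z ∈ boundedMonotone (m (Fin.last s)) (p (Fin.last s) + 1)) :
    shiftSnoc m (k, x, z) ∈ levelSet l m p := by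
  obtain ⟨h1, h2, h3, h4, h5⟩ := hx
  obtain ⟨hz1, hz2⟩ := hz
  simp only at h2 h3 h4 h5
  refine (snoc_mem_levelSet l m p _ _).2 ⟨⟨?_, ?_, ?_, ?_, ?_⟩, ?_, ?_, ?_, ?_, ?_⟩
  · exact fun i a b hab => Nat.add_le_add_right (h1 i hab) k
  · intro i a b
    have := h2 i a b
    simp only
    omega
  · intro i a
    have := h3 i a
    have := hl i
    simp only
    omega
  · intro i j hij a b
    have := h4 i j hij a b
    simp only
    omega
  · intro i j hij a b
    have := h5 i j hij a b
    have := hl i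
    have := hl j
    simp only
    omega
  · exact fun a b hab => Nat.add_le_add_right (hz1 hab) k
  · intro a b
    have := hz2 a
    simp only
    omega
  · intro a
    have := hz2 a
    simp only
    omega
  · intro i a b
    have := hz2 b
    simp only
    omega
  · intro i a b
    have := h3 i a
    have := hl i
    simp only
    omega

lemma aboveSnoc_mem_levelSet (hlpos : 0 < l (Fin.last s))
    (hl : ∀ i : Fin s, l (Fin.last s) ≤ l i.castSucc)
    {x : (i : Fin s) → Fin (m i.castSucc) → ℕ}
    (hx : x ∈ levelSet (fun i => l i.castSucc) (fun i => m i.castSucc) (fun i => p i.castSucc))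
    {z : Fin (m (Fin.last s)) → ℕ} (hz : z ∈ boundedMonotone (m (Fin.last s)) (p (Fin.last s))) :
    aboveSnoc m (l (Fin.last s) - 1) (x, z) ∈ levelSet l m p := by
  have hle := minEntry_le_left (l (Fin.last s) - 1) x
  have hent := minEntry_le_entry (l (Fin.last s) - 1) x
  have heq := minEntry_eq (l (Fin.last s) - 1) x
  refine (snoc_mem_levelSet l m p _ _).2 ⟨hx, ?_, ?_, ?_, ?_, ?_⟩
  · exact fun a b hab => Nat.add_le_add_right (hz.1 hab) _
  · intro a b
    have := hz.2 a
    simp only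
    omega
  · intro a
    have := hz.2 a
    simp only
    omega
  · intro i a b
    have := hz.2 b
    have := hent i a
    simp only
    omega
  · intro i a b
    obtain ⟨h1, h2, h3, h4, h5⟩ := hx
    simp only at h2 h3 h4 h5
    have := hl i
    simp only
    rcases heq with heq | ⟨j, c, heq⟩
    · have := h3 i a
      omega
    · rcases lt_trichotomy i j with hij | rfl | hij
      · have := h5 i j hij a c
        have := hl j
        omega
      · have := h2 i a c
        omega
      · have := h4 j i hij c a
        omega

lemma mem_levelSet_cases (hm : 0 < m (Fin.last s)) (hlpos : 0 < l (Fin.last s))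
    {y : (i : Fin (s + 1)) → Fin (m i) → ℕ} (hy : y ∈ levelSet l m p) :
    y ∈ shiftSnoc m '' (Set.Iio (l (Fin.last s)) ×ˢ
        levelSet (fun i => l i.castSucc - l (Fin.last s))
          (fun i => m i.castSucc) (fun i => p i.castSucc) ×ˢ
        pinnedMonotone (m (Fin.last s)) (p (Fin.last s))) ∪
      aboveSnoc m (l (Fin.last s) - 1) '' (levelSet (fun i => l i.castSucc)
        (fun i => m i.castSucc) (fun i => p i.castSucc) ×ˢ
        boundedMonotone (m (Fin.last s)) (p (Fin.last s))) := by
  obtain ⟨x, z, rfl⟩ : ∃ (x : (i : Fin s) → Fin (m i.castSucc) → ℕ)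
      (z : Fin (m (Fin.last s)) → ℕ), Fin.snoc x z = y :=
    ⟨Fin.init y, y (Fin.last s), Fin.snoc_init_self y⟩
  obtain ⟨hx, hz1, hz2, hz3, hz4, hz5⟩ := (snoc_mem_levelSet l m p x z).1 hy
  have hle := minEntry_le_left (l (Fin.last s) - 1) x
  have hent := minEntry_le_entry (l (Fin.last s) - 1) x
  have heq := minEntry_eq (l (Fin.last s) - 1) x
  have hz0 : ∀ a, z ⟨0, hm⟩ ≤ z a := fun a => hz1 (Fin.mk_le_of_le_val (Nat.zero_le _))
  by_cases hmin : z ⟨0, hm⟩ ≤ minEntry (l (Fin.last s) - 1) x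
  · left
    have hxk : ∀ i a, z ⟨0, hm⟩ ≤ x i a := fun i a => hmin.trans (hent i a)
    refine ⟨(z ⟨0, hm⟩, fun i a => x i a - z ⟨0, hm⟩, fun a => z a - z ⟨0, hm⟩),
      ⟨?_, ⟨?_, ?_, ?_, ?_, ?_⟩, ⟨?_, ?_⟩, ?_⟩, ?_⟩
    · simp only [Set.mem_Iio]
      omega
    · exact fun i a b hab => Nat.sub_le_sub_right (hx.1 i hab) _
    · intro i a b
      have := hx.2.1 i a b
      have := hxk i a
      have := hxk i b
      simp only at *
      omega
    · intro i a
      have := hz5 i a ⟨0, hm⟩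
      have := hxk i a
      simp only
      omega
    · intro i j hij a b
      have := hx.2.2.2.1 i j hij a b
      have := hxk i a
      have := hxk j b
      simp only at *
      omega
    · intro i j hij a b
      have := hx.2.2.2.2 i j hij a b
      have := hz5 i a ⟨0, hm⟩
      have := hz5 j b ⟨0, hm⟩
      have := hxk i a
      have := hxk j b
      simp only at *
      omega
    · exact fun a b hab => Nat.sub_le_sub_right (hz1 hab) _
    · intro a
      have := hz2 a ⟨0, hm⟩
      simp only
      omega
    · exact fun _ => Nat.sub_self _
    · simp only [shiftSnoc]
      congr 1
      · funext i a
        exact Nat.sub_add_cancel (hxk i a)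
      · funext a
        exact Nat.sub_add_cancel (hz0 a)
  · right
    refine ⟨(x, fun a => z a - (minEntry (l (Fin.last s) - 1) x + 1)), ⟨hx, ?_, ?_⟩, ?_⟩
    · exact fun a b hab => Nat.sub_le_sub_right (hz1 hab) _
    · intro a
      have := hz0 a
      have := hz3 a
      simp only
      rcases heq with heq | ⟨j, c, heq⟩
      · omega
      · have := hz4 j c a
        omega
    · simp only [aboveSnoc]
      congr 1
      funext a
      have := hz0 a
      exact Nat.sub_add_cancel (by omega)

lemma ncard_levelSet_succ (hm : 0 < m (Fin.last s)) (hlpos : 0 < l (Fin.last s))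
    (hl : ∀ i : Fin s, l (Fin.last s) ≤ l i.castSucc) :
    (levelSet l m p).ncard =
      l (Fin.last s) *
          ((levelSet (fun i => l i.castSucc - l (Fin.last s))
            (fun i => m i.castSucc) (fun i => p i.castSucc)).ncard *
            (p (Fin.last s) + m (Fin.last s) - 1).choose (m (Fin.last s) - 1)) +
        (levelSet (fun i => l i.castSucc) (fun i => m i.castSucc) (fun i => p i.castSucc)).ncard *
          (p (Fin.last s) + m (Fin.last s) - 1).choose (m (Fin.last s)) := by
  have hdecomp : levelSet l m p =
      shiftSnoc m '' (Set.Iio (l (Fin.last s)) ×ˢ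
        levelSet (fun i => l i.castSucc - l (Fin.last s))
          (fun i => m i.castSucc) (fun i => p i.castSucc) ×ˢ
        pinnedMonotone (m (Fin.last s)) (p (Fin.last s))) ∪
      aboveSnoc m (l (Fin.last s) - 1) '' (levelSet (fun i => l i.castSucc)
        (fun i => m i.castSucc) (fun i => p i.castSucc) ×ˢ
        boundedMonotone (m (Fin.last s)) (p (Fin.last s))) := by
    refine Set.Subset.antisymm (fun y hy => mem_levelSet_cases hm hlpos hy) ?_
    rintro _ (⟨⟨k, x, z⟩, ⟨hk, hx, hz⟩, rfl⟩ | ⟨⟨x, z⟩, ⟨hx, hz⟩, rfl⟩)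
    · exact shiftSnoc_mem_levelSet hl hk hx hz.1
    · exact aboveSnoc_mem_levelSet hlpos hl hx hz
  have hfin := levelSet_finite l m p
  rw [hdecomp] at hfin
  rw [hdecomp, Set.ncard_union_eq ?_ (hfin.subset Set.subset_union_left)
      (hfin.subset Set.subset_union_right),
    (shiftSnoc_injOn m hm _ _ _).ncard_image,
    Set.ncard_image_of_injective _ (aboveSnoc_injective m _), Set.ncard_prod, Set.ncard_prod,
    Set.ncard_prod, ncard_pinnedMonotone hm, ncard_boundedMonotone, Nat.multichoose_eq]
  · congr 2
    simp [Set.ncard_eq_toFinset_card']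
  · rw [Set.disjoint_left]
    rintro _ ⟨⟨k, x, z⟩, ⟨hk, hx, hz⟩, rfl⟩ ⟨⟨x', z'⟩, -, h⟩
    obtain ⟨rfl, h2⟩ := snoc_injective h
    have h0 : z ⟨0, hm⟩ = 0 := hz.2 hm
    have h3 := congrFun h2 ⟨0, hm⟩
    have hk : k < l (Fin.last s) := hk
    simp only [h0] at h3
    rcases minEntry_eq (l (Fin.last s) - 1) (fun i a => x i a + k) with heq | ⟨i, a, heq⟩
    · rw [heq] at h3
      omega
    · rw [heq] at h3
      omega

end Recursion

lemma mul_choose_pred (p : ℕ) {n : ℕ} (hn : 0 < n) :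
    p * (p + n - 1).choose (n - 1) = n * (p + n - 1).choose n := by
  obtain ⟨n, rfl⟩ := Nat.exists_eq_succ_of_ne_zero hn.ne'
  have h := Nat.choose_succ_right_eq (p + n) n
  simp only [Nat.add_sub_cancel] at h
  simp only [Nat.succ_eq_add_one, ← add_assoc, Nat.add_sub_cancel]
  rw [mul_comm, ← h, mul_comm]

theorem ncard_levelSet_mul {s : ℕ} (l m p : Fin (s + 1) → ℕ) (hlpos : ∀ i, 0 < l i)
    (hmpos : ∀ i, 0 < m i) (hdec : ∀ i j, i < j → l j < l i) (P : ℕ)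
    (hP : ∀ i, P = p i + ∑ k, m k * min (l i) (l k)) :
    (levelSet l m p).ncard * m 0 =
      P * (p 0 + m 0 - 1).choose (m 0 - 1) *
        ∏ i : Fin s, (p i.succ + m i.succ - 1).choose (m i.succ) := by
  induction s generalizing P with
  | zero =>
    have hone (l' m' p' : Fin 0 → ℕ) : (levelSet l' m' p').ncard = 1 := by
      rw [Set.ncard_eq_one]
      refine ⟨fun i => i.elim0, Set.eq_singleton_iff_unique_mem.2 ⟨?_, ?_⟩⟩
      · simp [levelSet]
      · intro x _
        exact Subsingleton.elim _ _
    rw [ncard_levelSet_succ (hmpos _) (hlpos _) (fun i => i.elim0), hone, hone]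
    have h := mul_choose_pred (p 0) (hmpos 0)
    have hP0 := hP 0
    simp only [Fin.sum_univ_succ, Finset.univ_eq_empty, Finset.sum_empty, Finset.prod_empty,
      min_self] at hP0 ⊢
    rw [hP0]
    simp only [Fin.last_zero]
    linear_combination -h
  | succ s ih =>
    have hlast (i : Fin (s + 1)) : l (Fin.last (s + 1)) < l i.castSucc :=
      hdec _ _ (Fin.castSucc_lt_last i)
    have hlastsum := hP (Fin.last (s + 1))
    rw [Fin.sum_univ_castSucc, min_self] at hlastsum
    simp only [min_eq_left (hlast _).le] at hlastsum
    have hinit := ih (fun i => l i.castSucc)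
        (fun i => m i.castSucc) (fun i => p i.castSucc) (fun i => hlpos _) (fun i => hmpos _)
      (fun i j hij => hdec _ _ (Fin.castSucc_lt_castSucc_iff.2 hij))
      (p (Fin.last _) + ∑ k : Fin (s + 1), m k.castSucc * l (Fin.last _)) (fun i => by
        have hi := hP i.castSucc
        rw [Fin.sum_univ_castSucc, min_eq_right (hlast i).le] at hi
        omega)
    have hshift := ih (fun i => l i.castSucc - l (Fin.last _))
        (fun i => m i.castSucc) (fun i => p i.castSucc)
      (fun i => Nat.sub_pos_of_lt (hlast i)) (fun i => hmpos _)
      (fun i j hij => Nat.sub_lt_sub_right (hlast j).le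
        (hdec _ _ (Fin.castSucc_lt_castSucc_iff.2 hij)))
      (p (Fin.last _)) (fun i => by
        have hi := hP i.castSucc
        rw [Fin.sum_univ_castSucc, min_eq_right (hlast i).le] at hi
        have hsplit : ∑ k : Fin (s + 1), m k.castSucc * min (l i.castSucc) (l k.castSucc) =
            ∑ k : Fin (s + 1), m k.castSucc *
              min (l i.castSucc - l (Fin.last _)) (l k.castSucc - l (Fin.last _)) +
            ∑ k : Fin (s + 1), m k.castSucc * l (Fin.last _) := by
          rw [← Finset.sum_add_distrib]
          refine Finset.sum_congr rfl fun k _ => ?_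
          rw [← mul_add]
          congr 1
          have := hlast i
          have := hlast k
          omega
        omega)
    rw [ncard_levelSet_succ (hmpos _) (hlpos _) (fun i => (hlast i).le), Fin.prod_univ_castSucc]
    have hc := mul_choose_pred (p (Fin.last _)) (hmpos (Fin.last (s + 1)))
    simp only [Fin.castSucc_zero, ← Fin.succ_castSucc, Fin.succ_last,
      Nat.succ_eq_add_one] at hinit hshift ⊢
    rw [hlastsum]
    linear_combination
      l (Fin.last _) * (p (Fin.last _) + m (Fin.last _) - 1).choose (m (Fin.last _) - 1) * hshift +
      (p (Fin.last _) + m (Fin.last _) - 1).choose (m (Fin.last _)) * hinit +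
      l (Fin.last _) * (p 0 + m 0 - 1).choose (m 0 - 1) *
        (∏ i : Fin s, (p i.castSucc.succ + m i.castSucc.succ - 1).choose (m i.castSucc.succ)) * hc

lemma eq_add_sum_mul_min {s : ℕ} (l m p : Fin (s + 1) → ℕ) (hdec : ∀ i j, i < j → l j < l i)
    (hrec : ∀ i j : Fin (s + 1), (j : ℕ) = (i : ℕ) + 1 →
      p j = p i + (∑ k ∈ Finset.univ.filter (fun k => k ≤ i), m k) * (l i - l j))
    (i : Fin (s + 1)) :
    p (Fin.last s) + (∑ k, m k) * l (Fin.last s) = p i + ∑ k, m k * min (l i) (l k) := by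
  have hanti : StrictAnti l := fun i j hij => hdec i j hij
  induction i using Fin.reverseInduction with
  | last =>
    rw [Finset.sum_mul]
    congr 1
    refine Finset.sum_congr rfl fun k _ => ?_
    rw [min_eq_left (hanti.antitone (Fin.le_last k))]
  | cast i ih =>
    rw [ih, hrec i.castSucc i.succ (by simp), add_assoc]
    congr 1
    rw [Finset.sum_mul, Finset.sum_filter, ← Finset.sum_add_distrib]
    refine Finset.sum_congr rfl fun k _ => ?_
    have hlt := hanti (Fin.castSucc_lt_succ (i := i))
    split_ifs with hk
    · have := hanti.antitone hk
      rw [← mul_add]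
      congr 1
      omega
    · have := hanti.antitone (Fin.castSucc_lt_iff_succ_le.1 (not_le.1 hk))
      rw [zero_add]
      congr 1
      omega

lemma card_filter_eq_ncard_levelSet {s : ℕ} (l m p : Fin s → ℕ) (hlpos : ∀ i, 0 < l i) (P : ℕ)
    (hP : ∀ i, p i + l i ≤ P) :
    ((Finset.univ : Finset ((i : Fin s) → Fin (m i) → Fin P)).filter
        (fun x =>
          (∀ i : Fin s, ∀ j k : Fin (m i), j ≤ k → x i j ≤ x i k) ∧
          (∀ i : Fin s, ∀ j k : Fin (m i),
            (x i j).val ≤ p i + min (x i k).val (l i - 1)) ∧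
          (∀ i j : Fin s, i < j → ∀ a : Fin (m i), ∀ b : Fin (m j),
            (x j b).val ≤ p j + (x i a).val) ∧
          (∀ i j : Fin s, i < j → ∀ a : Fin (m i), ∀ b : Fin (m j),
            (x i a).val + l j + 1 ≤ p i + l i + (x j b).val))).card =
      (levelSet l m p).ncard := by
  rw [← Set.ncard_coe_finset, ← Set.ncard_image_of_injective _
    (f := fun (x : (i : Fin s) → Fin (m i) → Fin P) i j => (x i j).val)
    (fun x y h => by
      funext i j
      exact Fin.ext (congrFun (congrFun h i) j))]
  congr 1
  ext y
  simp only [Set.mem_image, Finset.mem_coe, Finset.mem_filter, Finset.mem_univ, true_and]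
  constructor
  · rintro ⟨x, ⟨h1, h2, h3, h4⟩, rfl⟩
    refine ⟨fun i j k hjk => h1 i j k hjk, fun i j k => ?_, fun i j => ?_, h3, h4⟩
    · exact (h2 i j k).trans (Nat.add_le_add_left (min_le_left _ _) _)
    · have := h2 i j j
      have := hlpos i
      simp only
      omega
  · rintro ⟨h1, h2, h3, h4, h5⟩
    refine ⟨fun i j => ⟨y i j, ?_⟩, ⟨fun i j k hjk => h1 i hjk, fun i j k => ?_, h4, h5⟩, rfl⟩
    · have := h3 i j
      have := hP i
      omega
    · have := h2 i j k
      have := h3 i j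
      simp only
      omega

theorem stmt15 (s : ℕ) (hs : 0 < s) (l m : Fin s → ℕ)
    (hlpos : ∀ i, 0 < l i) (hmpos : ∀ i, 0 < m i)
    (hdec : ∀ i j : Fin s, i < j → l j < l i)
    (p : Fin s → ℕ)
    (hrec : ∀ i j : Fin s, (j : ℕ) = (i : ℕ) + 1 →
      p j = p i + (∑ k ∈ Finset.univ.filter (fun k : Fin s => k ≤ i), m k) * (l i - l j))
    (P : ℕ) (hP : P = p ⟨s - 1, by omega⟩ + (∑ i, m i) * l ⟨s - 1, by omega⟩) :
    ((((Finset.univ : Finset ((i : Fin s) → Fin (m i) → Fin P)).filter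
        (fun x =>
          (∀ i : Fin s, ∀ j k : Fin (m i), j ≤ k → x i j ≤ x i k) ∧
          (∀ i : Fin s, ∀ j k : Fin (m i),
            (x i j).val ≤ p i + min (x i k).val (l i - 1)) ∧
          (∀ i j : Fin s, i < j → ∀ a : Fin (m i), ∀ b : Fin (m j),
            (x j b).val ≤ p j + (x i a).val) ∧
          (∀ i j : Fin s, i < j → ∀ a : Fin (m i), ∀ b : Fin (m j),
            (x i a).val + l j + 1 ≤ p i + l i + (x j b).val))).card : ℚ)) =
    (P : ℚ) / (m ⟨0, hs⟩ : ℚ) *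
      (Nat.choose (p ⟨0, hs⟩ + m ⟨0, hs⟩ - 1) (m ⟨0, hs⟩ - 1) : ℚ) *
      ∏ i ∈ Finset.univ.filter (fun i : Fin s => 0 < (i : ℕ)),
        (Nat.choose (p i + m i - 1) (m i) : ℚ) := by
  obtain ⟨s, rfl⟩ := Nat.exists_eq_succ_of_ne_zero hs.ne'
  have hsum (i : Fin (s + 1)) : P = p i + ∑ k, m k * min (l i) (l k) :=
    hP.trans (eq_add_sum_mul_min l m p hdec hrec i)
  have hbound (i : Fin (s + 1)) : p i + l i ≤ P := by
    have h := Finset.single_le_sum (f := fun k => m k * min (l i) (l k))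
      (fun k _ => Nat.zero_le _) (Finset.mem_univ i)
    have := Nat.le_mul_of_pos_left (l i) (hmpos i)
    simp only [min_self] at h
    rw [hsum i]
    omega
  have hcard := ncard_levelSet_mul l m p hlpos hmpos hdec P hsum
  have hprod : ∏ i ∈ Finset.univ.filter (fun i : Fin (s + 1) => 0 < (i : ℕ)),
      (Nat.choose (p i + m i - 1) (m i) : ℚ) =
        ∏ i : Fin s, (Nat.choose (p i.succ + m i.succ - 1) (m i.succ) : ℚ) := by
    rw [Finset.prod_filter, Fin.prod_univ_succ]
    simp
  have hm0 : (m 0 : ℚ) ≠ 0 := Nat.cast_ne_zero.2 (hmpos 0).ne'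
  rw [card_filter_eq_ncard_levelSet l m p hlpos P hbound, hprod]
  have hcardQ : ((levelSet l m p).ncard : ℚ) * m 0 =
      P * (p 0 + m 0 - 1).choose (m 0 - 1) *
        ∏ i : Fin s, ((p i.succ + m i.succ - 1).choose (m i.succ) : ℚ) := by
    exact_mod_cast hcard
  show _ = (P : ℚ) / (m 0 : ℚ) * ((p 0 + m 0 - 1).choose (m 0 - 1) : ℚ) * _
  rw [div_mul_eq_mul_div, div_mul_eq_mul_div, eq_div_iff hm0]
  exact hcardQ
end

section
/- Total count check: for integers L ≥ 2M ≥ 0, the sum over all partitions λ of M of |Ω°(λ, L)| equals binom(L, M), where Ω°(λ,L) is the periodic angle-variable set and |Ω°(λ,L)| = (L/m_1)·binom(p_1+m_1−1, m_1−1)·∏_{i=2}^s binom(p_i+m_i−1, m_i) with the data ℓ_i, m_i, p_i determined by λ. -/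
open Finset

/-- Vacancy number `p(ℓ) = L − 2 Σ_j min(ℓ, ℓ_j) m_j` for the partition with
multiset of parts `parts`. -/
def vac (L : ℕ) (parts : Multiset ℕ) (ℓ : ℕ) : ℕ :=
  L - 2 * (parts.map (fun ℓ' => min ℓ ℓ')).sum

/-- The counting formula `(L/m₁)·C(p₁+m₁−1, m₁−1)·∏_{i≥2} C(p_i+m_i−1, m_i)`
for `|Ω°(λ,L)|`, where the index 1 corresponds to the largest part of `λ`
(interpreted as `1` for the empty partition). -/
noncomputable def levelSetCard (L : ℕ) (parts : Multiset ℕ) : ℚ :=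
  if parts = 0 then 1 else
    (L : ℚ) / (parts.count parts.sup : ℚ) *
      (Nat.choose (vac L parts parts.sup + parts.count parts.sup - 1)
        (parts.count parts.sup - 1) : ℚ) *
      ∏ ℓ ∈ parts.toFinset.erase parts.sup,
        (Nat.choose (vac L parts ℓ + parts.count ℓ - 1) (parts.count ℓ) : ℚ)

theorem sum_range_choose_sub_mul_choose (x y s : ℕ) :
    ∑ j ∈ range (s + 1), x.choose (s - j) * y.choose j = (x + y).choose s := by
  rw [add_comm x y, Nat.add_choose_eq, Nat.sum_antidiagonal_eq_sum_range_succ_mk]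
  exact sum_congr rfl fun j _ => mul_comm _ _

theorem choose_succ_mul_choose_sub (a b N j : ℕ) (hj : j ≤ N) :
    (a + 1).choose (j + 1) * (a + b + 1 + N - j).choose (N - j) =
      ∑ s ∈ range (N + 1),
        (a + 1).choose (s + 1) * (s + 1).choose (j + 1) * (b + N + 1).choose (N - s) := by
  rcases lt_or_ge a j with h | h
  · rw [Nat.choose_eq_zero_of_lt (by omega), zero_mul, eq_comm]
    refine sum_eq_zero fun s _ => ?_
    rcases lt_or_ge s j with hs | hs
    · simp [Nat.choose_eq_zero_of_lt (show s + 1 < j + 1 by omega)]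
    · simp [Nat.choose_eq_zero_of_lt (show a + 1 < s + 1 by omega)]
  · obtain ⟨K, rfl⟩ := Nat.exists_eq_add_of_le hj
    rw [show a + b + 1 + (j + K) - j = (b + (j + K) + 1) + (a - j) by omega,
      Nat.add_sub_cancel_left, ← sum_range_choose_sub_mul_choose (b + (j + K) + 1), mul_sum,
      add_assoc j K 1, sum_range_add _ j (K + 1)]
    rw [sum_eq_zero (s := range j), zero_add]
    · refine sum_congr rfl fun i _ => ?_
      rw [Nat.choose_mul (by omega), show a + 1 - (j + 1) = a - j by omega,
        show j + i + 1 - (j + 1) = i by omega, show j + K - (j + i) = K - i by omega]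
      ring
    · intro s hs
      rw [mem_range] at hs
      simp [Nat.choose_eq_zero_of_lt (show s + 1 < j + 1 by omega)]

theorem sum_choose_mul_choose_mul_choose (a b N : ℕ) :
    ∑ j ∈ range (N + 1),
      (a + b + 1 + N - j).choose (N - j) * (a + 1).choose (j + 1) * b.choose j =
      (a + N + 1).choose (N + 1) * (b + N + 1).choose N := by
  have hinner : ∀ s ∈ range (N + 1),
      ∑ j ∈ range (N + 1), (s + 1).choose (j + 1) * b.choose j = (s + 1 + b).choose s := by
    intro s hs
    rw [mem_range] at hs
    rw [← sum_range_choose_sub_mul_choose]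
    symm
    rw [← sum_subset (range_subset_range.2 (show s + 1 ≤ N + 1 by omega))]
    · refine sum_congr rfl fun j hj => ?_
      rw [mem_range] at hj
      rw [← Nat.choose_symm (show j + 1 ≤ s + 1 by omega), Nat.add_sub_add_right]
    · intro j _ hj
      rw [mem_range] at hj
      simp [Nat.choose_eq_zero_of_lt (show s + 1 < j + 1 by omega)]
  have houter : ∑ s ∈ range (N + 1), (a + 1).choose (s + 1) * N.choose s =
      (a + N + 1).choose (N + 1) := by
    rw [show a + N + 1 = N + (a + 1) by ring, ← sum_range_choose_sub_mul_choose N,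
      sum_range_succ' _ (N + 1)]
    simp only [Nat.add_sub_add_right, Nat.sub_zero, Nat.choose_succ_self, zero_mul, add_zero]
    refine sum_congr rfl fun s hs => ?_
    rw [mem_range] at hs
    rw [Nat.choose_symm (by omega), mul_comm]
  calc
    _ = ∑ j ∈ range (N + 1), ∑ s ∈ range (N + 1), (a + 1).choose (s + 1) *
          (b + N + 1).choose (N - s) * ((s + 1).choose (j + 1) * b.choose j) := by
      refine sum_congr rfl fun j hj => ?_
      rw [mem_range] at hj
      rw [mul_comm (Nat.choose _ _) ((a + 1).choose _),
        choose_succ_mul_choose_sub a b N j (by omega), sum_mul]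
      exact sum_congr rfl fun s _ => by ring
    _ = ∑ s ∈ range (N + 1), (b + N + 1).choose N * ((a + 1).choose (s + 1) * N.choose s) := by
      rw [sum_comm]
      refine sum_congr rfl fun s hs => ?_
      rw [← mul_sum, hinner s hs]
      rw [mem_range] at hs
      have h := Nat.choose_mul (n := b + N + 1) (k := b + 1 + s) (s := b + 1) (by omega)
      rw [show b + N + 1 - (b + 1) = N by omega, Nat.add_sub_cancel_left,
        ← Nat.choose_symm (show b + 1 + s ≤ b + N + 1 by omega),
        ← Nat.choose_symm (show b + 1 ≤ b + 1 + s by omega),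
        ← Nat.choose_symm (show b + 1 ≤ b + N + 1 by omega),
        show b + N + 1 - (b + 1 + s) = N - s by omega, Nat.add_sub_cancel_left,
        show b + N + 1 - (b + 1) = N by omega] at h
      rw [show s + 1 + b = b + 1 + s by ring, mul_assoc, h]
      ring
    _ = _ := by rw [← mul_sum, houter, mul_comm]

theorem choose_div_succ (a j : ℕ) :
    (a.choose j : ℚ) / (j + 1) = ((a + 1).choose (j + 1) : ℚ) / (a + 1) := by
  rw [div_eq_div_iff (by positivity) (by positivity)]
  have := Nat.add_one_mul_choose_eq a j
  rw [mul_comm]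
  exact_mod_cast this

theorem sum_choose_mul_choose_mul_choose_div (a b N : ℕ) :
    ∑ j ∈ range (N + 1), ((a + b + 1 + N - j).choose (N - j) : ℚ) *
      (a.choose j * b.choose j / (j + 1)) =
      (a + N + 1).choose N * (b + N + 1).choose N / (N + 1) := by
  have h := sum_choose_mul_choose_mul_choose a b N
  have h2 : ((a + N + 1).choose N : ℚ) / (N + 1) = (a + N + 1).choose (N + 1) / (a + 1) := by
    rw [div_eq_div_iff (by positivity) (by positivity)]
    have := Nat.choose_succ_right_eq (a + N + 1) N
    rw [show a + N + 1 - N = a + 1 by omega] at this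
    exact_mod_cast this.symm
  calc
    _ = (∑ j ∈ range (N + 1),
      (a + b + 1 + N - j).choose (N - j) * (a + 1).choose (j + 1) * b.choose j : ℕ) /
        (a + 1 : ℚ) := by
      push_cast
      rw [sum_div]
      refine sum_congr rfl fun j _ => ?_
      rw [mul_div_right_comm, choose_div_succ]
      ring
    _ = _ := by
      rw [h, mul_div_right_comm, h2]
      push_cast
      ring

/-- The factor of `levelSetCard` contributed by parts equal to `ℓ`, for `ℓ` not the largest part. -/
def partFactor (L : ℕ) (s : Multiset ℕ) (ℓ : ℕ) : ℚ :=
  (vac L s ℓ + s.count ℓ - 1).choose (s.count ℓ)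

/-- `levelSetCard L s / L` for nonempty `s`, with the product running over all sizes below the
largest part. -/
def reducedCard (L : ℕ) (s : Multiset ℕ) : ℚ :=
  1 / (s.count s.sup : ℚ) *
    ((vac L s s.sup + s.count s.sup - 1).choose (s.count s.sup - 1) : ℚ) *
    ∏ i ∈ range (s.sup - 1), partFactor L s (i + 1)

theorem partFactor_of_notMem {L : ℕ} {s : Multiset ℕ} {ℓ : ℕ} (h : ℓ ∉ s) :
    partFactor L s ℓ = 1 := by
  simp [partFactor, Multiset.count_eq_zero_of_notMem h]

theorem levelSetCard_eq_mul_reducedCard (L : ℕ) (s : Multiset ℕ) (hs : s ≠ 0)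
    (hpos : ∀ x ∈ s, 0 < x) : levelSetCard L s = L * reducedCard L s := by
  have hprod : ∏ ℓ ∈ s.toFinset.erase s.sup, partFactor L s ℓ =
      ∏ i ∈ range (s.sup - 1), partFactor L s (i + 1) := by
    have hIco := prod_Ico_eq_prod_range (partFactor L s) 1 s.sup
    simp only [add_comm 1] at hIco
    rw [← hIco]
    refine prod_subset (fun ℓ hℓ => ?_) fun ℓ hℓ hnot => partFactor_of_notMem fun hmem => hnot ?_
    · rw [mem_erase, Multiset.mem_toFinset] at hℓ
      exact mem_Ico.2 ⟨hpos ℓ hℓ.2, lt_of_le_of_ne (Multiset.le_sup hℓ.2) hℓ.1⟩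
    · rw [mem_Ico] at hℓ
      exact mem_erase.2 ⟨hℓ.2.ne, Multiset.mem_toFinset.2 hmem⟩
  rw [levelSetCard, if_neg hs, reducedCard, ← hprod]
  simp only [partFactor]
  ring

/-- The multisets of positive parts with sum `M`. -/
def partsFinset (M : ℕ) : Finset (Multiset ℕ) :=
  univ.image (Nat.Partition.parts : Nat.Partition M → Multiset ℕ)

theorem mem_partsFinset {M : ℕ} {s : Multiset ℕ} :
    s ∈ partsFinset M ↔ (∀ x ∈ s, 0 < x) ∧ s.sum = M := by
  simp only [partsFinset, mem_image, mem_univ, true_and]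
  constructor
  · rintro ⟨p, rfl⟩
    exact ⟨fun x hx => p.parts_pos hx, p.parts_sum⟩
  · rintro ⟨hpos, hsum⟩
    exact ⟨⟨s, fun {x} hx => hpos x hx, hsum⟩, rfl⟩

/-- Prepend a column of height `n` to the Young diagram with rows `t`. -/
def addColumn (n : ℕ) (t : Multiset ℕ) : Multiset ℕ :=
  t.map Nat.succ + Multiset.replicate (n - t.card) 1

/-- Remove the first column of the Young diagram with rows `s`. -/
def removeColumn (s : Multiset ℕ) : Multiset ℕ :=
  (s.filter (1 < ·)).map Nat.pred

theorem card_addColumn {n : ℕ} {t : Multiset ℕ} (h : t.card ≤ n) : (addColumn n t).card = n := by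
  simp [addColumn, h]

theorem sum_map_succ (t : Multiset ℕ) : (t.map Nat.succ).sum = t.sum + t.card := by
  simp [Nat.succ_eq_add_one, Multiset.sum_map_add]

theorem sum_addColumn {n : ℕ} {t : Multiset ℕ} (h : t.card ≤ n) :
    (addColumn n t).sum = t.sum + n := by
  rw [addColumn, Multiset.sum_add, sum_map_succ, Multiset.sum_replicate, smul_eq_mul]
  omega

theorem removeColumn_addColumn {n : ℕ} {t : Multiset ℕ} (hpos : ∀ x ∈ t, 0 < x) :
    removeColumn (addColumn n t) = t := by
  have h1 : (t.map Nat.succ).filter (1 < ·) = t.map Nat.succ := by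
    rw [Multiset.filter_eq_self]
    intro x hx
    obtain ⟨y, hy, rfl⟩ := Multiset.mem_map.1 hx
    exact Nat.succ_lt_succ (hpos y hy)
  have h2 : (Multiset.replicate (n - t.card) 1).filter (1 < ·) = 0 := by
    rw [Multiset.filter_eq_nil]
    intro x hx
    simp [Multiset.eq_of_mem_replicate hx]
  rw [removeColumn, addColumn, Multiset.filter_add, h1, h2, add_zero, Multiset.map_map]
  simp

theorem addColumn_removeColumn {s : Multiset ℕ} (hpos : ∀ x ∈ s, 0 < x) :
    addColumn s.card (removeColumn s) = s := by
  have hsplit : s.filter (1 < ·) + s.filter (¬ 1 < ·) = s := Multiset.filter_add_not _ _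
  have hmap : (removeColumn s).map Nat.succ = s.filter (1 < ·) := by
    rw [removeColumn, Multiset.map_map]
    conv_rhs => rw [← Multiset.map_id (s.filter (1 < ·))]
    refine Multiset.map_congr rfl fun x hx => ?_
    exact Nat.succ_pred_eq_of_pos (hpos x (Multiset.mem_filter.1 hx).1)
  have hone : Multiset.replicate (s.card - (removeColumn s).card) 1 = s.filter (¬ 1 < ·) := by
    symm
    rw [Multiset.eq_replicate]
    constructor
    · have := congrArg Multiset.card hsplit
      rw [Multiset.card_add] at this
      rw [removeColumn, Multiset.card_map]
      omega
    · intro x hx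
      have := Multiset.mem_filter.1 hx
      have := hpos x this.1
      omega
  rw [addColumn, hmap, hone, hsplit]

theorem card_removeColumn_le (s : Multiset ℕ) : (removeColumn s).card ≤ s.card := by
  rw [removeColumn, Multiset.card_map]
  exact Multiset.card_le_card (Multiset.filter_le _ _)

theorem pos_of_mem_removeColumn {s : Multiset ℕ} {x : ℕ} (hx : x ∈ removeColumn s) : 0 < x := by
  obtain ⟨y, hy, rfl⟩ := Multiset.mem_map.1 hx
  exact Nat.sub_pos_of_lt (Multiset.mem_filter.1 hy).2

theorem pos_of_mem_addColumn {n : ℕ} {t : Multiset ℕ} {x : ℕ} (hx : x ∈ addColumn n t) :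
    0 < x := by
  rcases Multiset.mem_add.1 hx with h | h
  · obtain ⟨y, -, rfl⟩ := Multiset.mem_map.1 h
    exact Nat.succ_pos y
  · simp [Multiset.eq_of_mem_replicate h]

theorem sum_filter_card_eq_sum_addColumn {M n : ℕ} (hn : n ≤ M) (f : Multiset ℕ → ℚ) :
    ∑ s ∈ (partsFinset M).filter (·.card = n), f s =
      ∑ t ∈ (partsFinset (M - n)).filter (·.card ≤ n), f (addColumn n t) := by
  refine sum_bij' (fun s _ => removeColumn s) (fun t _ => addColumn n t) ?_ ?_ ?_ ?_ ?_
  · intro s hs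
    simp only [mem_filter, mem_partsFinset] at hs ⊢
    obtain ⟨⟨hpos, hsum⟩, rfl⟩ := hs
    refine ⟨⟨fun x hx => pos_of_mem_removeColumn hx, ?_⟩, card_removeColumn_le s⟩
    have h := sum_addColumn (card_removeColumn_le s)
    rw [addColumn_removeColumn hpos] at h
    omega
  · intro t ht
    simp only [mem_filter, mem_partsFinset] at ht ⊢
    refine ⟨⟨fun x hx => pos_of_mem_addColumn hx, ?_⟩, card_addColumn ht.2⟩
    rw [sum_addColumn ht.2]
    omega
  · intro s hs
    simp only [mem_filter, mem_partsFinset] at hs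
    obtain ⟨⟨hpos, -⟩, rfl⟩ := hs
    exact addColumn_removeColumn hpos
  · intro t ht
    simp only [mem_filter, mem_partsFinset] at ht
    exact removeColumn_addColumn ht.1.1
  · intro s hs
    simp only [mem_filter, mem_partsFinset] at hs
    obtain ⟨⟨hpos, -⟩, rfl⟩ := hs
    rw [addColumn_removeColumn hpos]

theorem sup_addColumn {n : ℕ} {t : Multiset ℕ} (ht : t ≠ 0) :
    (addColumn n t).sup = t.sup + 1 := by
  apply le_antisymm
  · refine Multiset.sup_le.2 fun x hx => ?_
    rcases Multiset.mem_add.1 hx with h | h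
    · obtain ⟨y, hy, rfl⟩ := Multiset.mem_map.1 h
      exact Nat.succ_le_succ (Multiset.le_sup hy)
    · simp [Multiset.eq_of_mem_replicate h]
  · have hlt : t.sup < (addColumn n t).sup := by
      have hsucc : ∀ y ∈ t, y + 1 ≤ (addColumn n t).sup := fun y hy =>
        Multiset.le_sup (Multiset.mem_add.2 (Or.inl (Multiset.mem_map_of_mem _ hy)))
      obtain ⟨z, hz⟩ := Multiset.exists_mem_of_ne_zero ht
      have hz' := hsucc z hz
      have hle : t.sup ≤ (addColumn n t).sup - 1 := by
        refine Multiset.sup_le.2 fun y hy => ?_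
        have := hsucc y hy
        omega
      omega
    exact hlt

theorem vac_addColumn {L n : ℕ} {t : Multiset ℕ} (h : t.card ≤ n) (ℓ : ℕ) :
    vac L (addColumn n t) (ℓ + 1) = vac (L - 2 * n) t ℓ := by
  have hsum : ((addColumn n t).map (fun x => min (ℓ + 1) x)).sum =
      (t.map (fun x => min ℓ x)).sum + n := by
    rw [addColumn, Multiset.map_add, Multiset.sum_add, Multiset.map_map, Multiset.map_replicate,
      Multiset.sum_replicate]
    have : ((fun x => min (ℓ + 1) x) ∘ Nat.succ) = fun x => min ℓ x + 1 := by
      funext x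
      simp only [Function.comp_apply]
      omega
    rw [this, Multiset.sum_map_add]
    simp only [Multiset.map_const', Multiset.sum_replicate, smul_eq_mul, mul_one,
      min_eq_right (Nat.le_add_left 1 ℓ)]
    rw [add_assoc, Nat.add_sub_cancel' h]
  rw [vac, vac, hsum]
  omega

theorem count_addColumn {n : ℕ} {t : Multiset ℕ} {ℓ : ℕ} (hℓ : 0 < ℓ) :
    (addColumn n t).count (ℓ + 1) = t.count ℓ := by
  rw [addColumn, Multiset.count_add, Multiset.count_replicate, if_neg (by omega), add_zero]
  exact Multiset.count_map_eq_count' _ _ Nat.succ_injective _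

theorem count_one_addColumn {n : ℕ} {t : Multiset ℕ} (hpos : ∀ x ∈ t, 0 < x) :
    (addColumn n t).count 1 = n - t.card := by
  rw [addColumn, Multiset.count_add, Multiset.count_replicate_self,
    Multiset.count_eq_zero_of_notMem, zero_add]
  intro h
  obtain ⟨y, hy, hy1⟩ := Multiset.mem_map.1 h
  have := hpos y hy
  omega

theorem reducedCard_addColumn {L n : ℕ} {t : Multiset ℕ} (ht : t ≠ 0) (hpos : ∀ x ∈ t, 0 < x)
    (h : t.card ≤ n) :
    reducedCard L (addColumn n t) =
      ((L - 2 * n + (n - t.card) - 1).choose (n - t.card) : ℚ) * reducedCard (L - 2 * n) t := by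
  have hsup : 0 < t.sup := by
    obtain ⟨z, hz⟩ := Multiset.exists_mem_of_ne_zero ht
    exact (hpos z hz).trans_le (Multiset.le_sup hz)
  obtain ⟨q, hq⟩ := Nat.exists_eq_add_of_lt hsup
  rw [zero_add] at hq
  have hvac : vac L (addColumn n t) 1 = L - 2 * n := by
    rw [← zero_add 1, vac_addColumn h]
    simp [vac]
  have hfac : ∀ i, partFactor L (addColumn n t) (i + 1 + 1) =
      partFactor (L - 2 * n) t (i + 1) := fun i => by
    rw [partFactor, partFactor, vac_addColumn h, count_addColumn i.succ_pos]
  rw [reducedCard, reducedCard, sup_addColumn ht, vac_addColumn h, count_addColumn hsup,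
    Nat.add_sub_cancel, hq, prod_range_succ', Nat.add_sub_cancel]
  simp only [hfac]
  rw [zero_add, partFactor, hvac, count_one_addColumn hpos]
  ring

theorem reducedCard_replicate_one {L n : ℕ} (hn : 0 < n) :
    reducedCard L (Multiset.replicate n 1) = ((L - 2 * n + n - 1).choose (n - 1) : ℚ) / n := by
  have hsup : (Multiset.replicate n 1).sup = 1 := by
    apply le_antisymm
    · exact Multiset.sup_le.2 fun x hx => (Multiset.eq_of_mem_replicate hx).le
    · exact Multiset.le_sup (Multiset.mem_replicate.2 ⟨hn.ne', rfl⟩)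
  simp only [reducedCard, hsup, Multiset.count_replicate_self, vac, Multiset.map_replicate,
    Multiset.sum_replicate, smul_eq_mul, min_self, mul_one, Nat.sub_self, range_zero, prod_empty]
  ring

theorem card_le_sum_of_pos {s : Multiset ℕ} (hpos : ∀ x ∈ s, 0 < x) : s.card ≤ s.sum := by
  simpa using Multiset.card_nsmul_le_sum (s := s) (a := 1) hpos

theorem partsFinset_filter_card_self (n : ℕ) :
    (partsFinset n).filter (·.card = n) = {Multiset.replicate n 1} := by
  ext s
  simp only [mem_filter, mem_partsFinset, mem_singleton]
  constructor
  · rintro ⟨⟨hpos, hsum⟩, hcard⟩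
    have h := sum_addColumn (card_removeColumn_le s)
    rw [addColumn_removeColumn hpos] at h
    have hzero : removeColumn s = 0 := by
      have := card_le_sum_of_pos (s := removeColumn s) fun x hx => pos_of_mem_removeColumn hx
      rw [← Multiset.card_eq_zero]
      omega
    have h' := addColumn_removeColumn hpos
    rw [hzero, hcard] at h'
    simpa [addColumn] using h'.symm
  · rintro rfl
    simp +contextual [Multiset.mem_replicate]

theorem sum_reducedCard (M : ℕ) : ∀ L n : ℕ, 0 < n → 0 < M → 2 * M ≤ L →
    ∑ s ∈ (partsFinset M).filter (·.card = n), reducedCard L s =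
      ((M - 1).choose (n - 1) : ℚ) * (L - M - 1).choose (n - 1) / n := by
  induction M using Nat.strong_induction_on with
  | _ M ih =>
  intro L n hn hM hL
  rcases lt_trichotomy M n with h | rfl | h
  · rw [Nat.choose_eq_zero_of_lt (by omega), filter_eq_empty_iff.2]
    · simp
    · intro s hs
      obtain ⟨hpos, hsum⟩ := mem_partsFinset.1 hs
      have := card_le_sum_of_pos hpos
      omega
  · rw [partsFinset_filter_card_self, sum_singleton, reducedCard_replicate_one hn,
      show L - 2 * M + M - 1 = L - M - 1 by omega]
    simp
  · obtain ⟨N, rfl⟩ := Nat.exists_eq_add_of_lt hn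
    obtain ⟨a, rfl⟩ := Nat.exists_eq_add_of_lt h
    obtain ⟨c, rfl⟩ := Nat.exists_eq_add_of_le hL
    simp only [zero_add] at *
    rw [sum_filter_card_eq_sum_addColumn h.le, show N + 1 + a + 1 - (N + 1) = a + 1 by omega,
      ← sum_fiberwise_of_maps_to (g := Multiset.card) (t := range (N + 1 + 1))
        (fun t ht => mem_range.2 (Nat.lt_succ_of_le (mem_filter.1 ht).2)), sum_range_succ']
    have hne : ∀ t ∈ partsFinset (a + 1), t ≠ 0 := by
      rintro t ht rfl
      have := (mem_partsFinset.1 ht).2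
      simp at this
    rw [sum_eq_zero (s := filter (fun t => Multiset.card t = 0) _), add_zero]
    · have hb := sum_choose_mul_choose_mul_choose_div a (a + c) N
      rw [show N + 1 + a + 1 - 1 = a + N + 1 by omega, Nat.add_sub_cancel,
        show 2 * (N + 1 + a + 1) + c - (N + 1 + a + 1) - 1 = a + c + N + 1 by omega]
      push_cast
      rw [← hb]
      refine sum_congr rfl fun j hj => ?_
      rw [mem_range] at hj
      have hrec := ih (a + 1) (by omega) (2 * (a + 1) + c) (j + 1) (by omega) (by omega) (by omega)
      rw [Nat.add_sub_cancel, Nat.add_sub_cancel,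
        show 2 * (a + 1) + c - (a + 1) - 1 = a + c by omega] at hrec
      push_cast at hrec
      rw [← hrec, mul_sum, filter_filter]
      refine sum_congr ?_ fun t ht => ?_
      · ext t
        simp only [mem_filter]
        refine and_congr_right fun _ => ?_
        omega
      · obtain ⟨hmem, hcard⟩ := mem_filter.1 ht
        rw [reducedCard_addColumn (hne t hmem) (mem_partsFinset.1 hmem).1 (by omega), hcard,
          show 2 * (N + 1 + a + 1) + c - 2 * (N + 1) = 2 * (a + 1) + c by omega,
          show N + 1 - (j + 1) = N - j by omega,
          show 2 * (a + 1) + c + (N - j) - 1 = a + (a + c) + 1 + N - j by omega]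
    · intro t ht
      simp only [mem_filter, Multiset.card_eq_zero] at ht
      exact absurd ht.2 (hne t ht.1.1)

theorem sum_choose_mul_choose_div {L M : ℕ} (hM : 0 < M) (h : 2 * M ≤ L) :
    ∑ j ∈ range M, (L : ℚ) * (((M - 1).choose j : ℚ) * (L - M - 1).choose j / (j + 1 : ℕ)) =
      L.choose M := by
  obtain ⟨m, rfl⟩ := Nat.exists_eq_add_of_lt hM
  obtain ⟨c, rfl⟩ := Nat.exists_eq_add_of_le h
  simp only [zero_add] at *
  have hV := sum_range_choose_sub_mul_choose (m + 1) (m + c) m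
  have hterm : ∀ j ∈ range (m + 1),
      ((2 * (m + 1) + c : ℕ) : ℚ) *
        (((m + 1 - 1).choose j : ℚ) * (2 * (m + 1) + c - (m + 1) - 1).choose j / (j + 1 : ℕ)) =
      ((2 * (m + 1) + c : ℕ) : ℚ) / (m + 1) *
        (((m + 1).choose (m - j) * (m + c).choose j : ℕ) : ℚ) := by
    intro j hj
    rw [mem_range] at hj
    rw [Nat.add_sub_cancel, show 2 * (m + 1) + c - (m + 1) - 1 = m + c by omega,
      show m - j = m + 1 - (j + 1) by omega, Nat.choose_symm (by omega), mul_div_right_comm]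
    push_cast
    rw [choose_div_succ]
    ring
  rw [sum_congr rfl hterm, ← mul_sum, ← Nat.cast_sum, hV, div_mul_eq_mul_div,
    div_eq_iff (by positivity)]
  have := Nat.add_one_mul_choose_eq (m + 1 + (m + c)) m
  rw [show m + 1 + (m + c) + 1 = 2 * (m + 1) + c by ring] at this
  exact_mod_cast this

theorem stmt17 (L M : ℕ) (h : 2 * M ≤ L) :
    ∑ lam : Nat.Partition M, levelSetCard L lam.parts = (Nat.choose L M : ℚ) := by
  have himage : ∑ lam : Nat.Partition M, levelSetCard L lam.parts =
      ∑ s ∈ partsFinset M, levelSetCard L s := by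
    rw [partsFinset, sum_image fun p _ q _ hpq => Nat.Partition.ext hpq]
  rcases Nat.eq_zero_or_pos M with rfl | hM
  · simp [levelSetCard]
  · have hne : ∀ s ∈ partsFinset M, s ≠ 0 := by
      rintro s hs rfl
      have := (mem_partsFinset.1 hs).2
      simp at this
      omega
    have hcard : ∀ s ∈ partsFinset M, s.card ∈ range (M + 1) := fun s hs => by
      obtain ⟨hpos, hsum⟩ := mem_partsFinset.1 hs
      have := card_le_sum_of_pos hpos
      exact mem_range.2 (by omega)
    rw [himage, sum_congr rfl fun s hs =>
        levelSetCard_eq_mul_reducedCard L s (hne s hs) (mem_partsFinset.1 hs).1,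
      ← sum_fiberwise_of_maps_to hcard, sum_range_succ', sum_eq_zero (s := filter _ _), add_zero,
      ← sum_choose_mul_choose_div hM h]
    · refine sum_congr rfl fun j _ => ?_
      rw [← mul_sum, sum_reducedCard M L (j + 1) (by omega) hM h, Nat.add_sub_cancel]
    · intro s hs
      simp only [mem_filter, Multiset.card_eq_zero] at hs
      exact absurd hs.2 (hne s hs.1)
end
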